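/- arXiv:math/0605583 — 3 statements merged into one kernel-verified Lean document; each statement's English description precedes it below -/
import Mathlib

section
/- Let N_n denote the number of perfect matchings of the toroidal square lattice C_{2n} □ C_{2n} (the box product of two cycle graphs on 2n vertices, i.e. the quotient graph ℤ²/(2nℤ)², which has 4n² vertices). Let Z_n = (√2)^{2n²} · N_n be the dimer partition function of this graph with constant edge weight √2 (every perfect matching has exactly 2n² edges). Then lim_{n→∞} (1/(2n²)) · log Z_n = (1/2)·log 2 + (2/π)·K, where K = ∑_{k=0}^∞ (−1)^k/(2k+1)² is Catalan's constant. -/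
/-!
The growth rate is first computed for domino tilings of squares, where Kasteleyn's determinant can be
diagonalized explicitly, and is then transferred to the torus by comparing boundary conditions. This
avoids the four Pfaffians of the toroidal Kasteleyn formula.

*Squares.* Let `Z` be the number of tilings of the `S × S` square, `S` even. The Kasteleyn matrix
with weight `1` on horizontal and `i` on vertical edges satisfies `|det K| = Z²` (`norm_det`): the
nonzero terms of the determinant correspond to pairs of tilings, rotating two dominoes of a `2 × 2`
block does not change a term (`W_flip`), and all tilings are connected by such flips
(`reach_brick`), so all terms are equal. In a basis of sines the eigenvalues are
`2 cos θ_j + 2i cos θ_k` (`det_K_eq`), and the product over `j` is a value of a Chebyshev polynomial, so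
that `2 log Z` is `S · ∑_k |arsinh (cos θ_k)|` up to `O(S)` (`two_log_Z`). This is a Riemann sum, and
`∫₀^π |arsinh (cos x)| dx = 2G` with `G` Catalan's constant (`integral_gfun`); hence
`log Z = S² G / π + O(S)` (`log_Z_square`).

*From squares to the torus.* Let `N` be the number of perfect matchings of the torus with side
`L = 2n`. A tiling of the square is a matching of the torus, so `Z ≤ N` (`torus_lower`). Conversely a
matching of the torus, cut open, is a tiling of the square with dominoes protruding equally through
opposite sides, and there are at most `4 ^ L` patterns of protrusions (`torus_upper`). For a fixed
pattern, `4m²` such tilings can be assembled, by reflections and translations, and completed by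
a frame of width `L`, to an ordinary tiling of a square of side `2L(m + 1)` (`Z_pow_le`). Taking
logarithms and letting `m → ∞`, each pattern has at most `exp (L² G / π)` tilings (`log_Z_le`).
Therefore `log N = L² G / π + O(L)`; dividing by `2n² = L² / 2` gives `2G / π`, and the
weights contribute `log √2 = (log 2) / 2`.
-/

/-! ### Tilings of rectangles with prescribed protrusions -/

namespace Dimer

/-- `IsTil a b l r u t p` says that `p` encodes a domino tiling of the `a × b` rectangle of cells
`(x, y)`, `x < a`, `y < b`, in which dominoes may protrude through the boundary.
`p.1 x y` is the indicator of a horizontal domino occupying `(x - 1, y)` and `(x, y)`, and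
`p.2 x y` of a vertical one occupying `(x, y - 1)` and `(x, y)`. The protrusions through the left,
right, bottom and top sides are prescribed by `l`, `r`, `u`, `t`. Outside the rectangle `p` vanishes,
so that tilings correspond to functions uniquely. -/
structure IsTil (a b : ℕ) (l r u t : ℕ → ℕ) (p : (ℕ → ℕ → ℕ) × (ℕ → ℕ → ℕ)) : Prop where
  cell : ∀ x y, x < a → y < b → p.1 x y + p.1 (x + 1) y + p.2 x y + p.2 x (y + 1) = 1
  left : ∀ y, y < b → p.1 0 y = l y
  right : ∀ y, y < b → p.1 a y = r y
  bot : ∀ x, x < a → p.2 x 0 = u x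
  top : ∀ x, x < a → p.2 x b = t x
  hsupp : ∀ x y, a < x ∨ b ≤ y → p.1 x y = 0
  vsupp : ∀ x y, a ≤ x ∨ b < y → p.2 x y = 0

/-- The type of tilings of the `a × b` rectangle with protrusions `l`, `r`, `u`, `t`. -/
abbrev Til (a b : ℕ) (l r u t : ℕ → ℕ) : Type :=
  {p : (ℕ → ℕ → ℕ) × (ℕ → ℕ → ℕ) // IsTil a b l r u t p}

/-- The number of tilings of the `a × b` rectangle with protrusions `l`, `r`, `u`, `t` through the
left, right, bottom and top sides; `Z a b 0 0 0 0` counts the ordinary domino tilings. -/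
noncomputable def Z (a b : ℕ) (l r u t : ℕ → ℕ) : ℕ := Nat.card (Til a b l r u t)

variable {a b a' : ℕ} {l r u t m u' t' U T : ℕ → ℕ}

lemma IsTil.ext' {p q : (ℕ → ℕ → ℕ) × (ℕ → ℕ → ℕ)} (hp : IsTil a b l r u t p)
    (hq : IsTil a b l r u t q) (h1 : ∀ x y, x ≤ a → y < b → p.1 x y = q.1 x y)
    (h2 : ∀ x y, x < a → y ≤ b → p.2 x y = q.2 x y) : p = q := by
  refine Prod.ext ?_ ?_
  · funext x y
    by_cases h : a < x ∨ b ≤ y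
    · rw [hp.hsupp x y h, hq.hsupp x y h]
    · exact h1 x y (by omega) (by omega)
  · funext x y
    by_cases h : a ≤ x ∨ b < y
    · rw [hp.vsupp x y h, hq.vsupp x y h]
    · exact h2 x y (by omega) (by omega)

instance : Finite (Til a b l r u t) := by
  refine Finite.of_injective (β := Fin (a + 1) × Fin (b + 1) → Bool × Bool)
    (fun p i => (decide (p.1.1 i.1 i.2 = 1), decide (p.1.2 i.1 i.2 = 1))) ?_
  rintro ⟨p, hp⟩ ⟨q, hq⟩ h
  have key : ∀ x y, x ≤ a → y ≤ b →
      ((p.1 x y = 1 ↔ q.1 x y = 1) ∧ (p.2 x y = 1 ↔ q.2 x y = 1)) := by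
    intro x y hx hy
    have := congrFun h (⟨x, by omega⟩, ⟨y, by omega⟩)
    simpa using this
  refine Subtype.ext (hp.ext' hq ?_ ?_)
  · intro x y hx hy
    rcases Nat.lt_or_ge x a with hxa | hxa
    · have := hp.cell x y hxa hy
      have := hq.cell x y hxa hy
      have := (key x y hx hy.le).1
      dsimp only at *
      omega
    · obtain rfl : x = a := by omega
      exact (hp.right y hy).trans (hq.right y hy).symm
  · intro x y hx hy
    rcases Nat.lt_or_ge y b with hxa | hxa
    · have := hp.cell x y hx hxa
      have := hq.cell x y hx hxa
      have := (key x y hx.le hy).2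
      dsimp only at *
      omega
    · obtain rfl : y = b := by omega
      exact (hp.top x hx).trans (hq.top x hx).symm

lemma Z_pos {p : (ℕ → ℕ → ℕ) × (ℕ → ℕ → ℕ)} (hp : IsTil a b l r u t p) :
    1 ≤ Z a b l r u t := by
  have : Nonempty (Til a b l r u t) := ⟨⟨p, hp⟩⟩
  exact Nat.card_pos

lemma Z_le_of_map {a b a₂ b₂ : ℕ} {l r u t l₂ r₂ u₂ t₂ : ℕ → ℕ}
    (f : (ℕ → ℕ → ℕ) × (ℕ → ℕ → ℕ) → (ℕ → ℕ → ℕ) × (ℕ → ℕ → ℕ))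
    (hf : ∀ p, IsTil a b l r u t p → IsTil a₂ b₂ l₂ r₂ u₂ t₂ (f p))
    (hinj : ∀ p q, IsTil a b l r u t p → IsTil a b l r u t q → f p = f q → p = q) :
    Z a b l r u t ≤ Z a₂ b₂ l₂ r₂ u₂ t₂ :=
  Nat.card_le_card_of_injective
    (fun p : Til a b l r u t => (⟨f p.1, hf p.1 p.2⟩ : Til a₂ b₂ l₂ r₂ u₂ t₂))
    (fun p q h => Subtype.ext (hinj p.1 q.1 p.2 q.2 (congrArg Subtype.val h)))

lemma Z_transpose : Z a b l r u t ≤ Z b a u t l r := by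
  refine Z_le_of_map (fun p => (fun x y => p.2 y x, fun x y => p.1 y x)) ?_ ?_
  · intro p hp
    refine ⟨fun x y hx hy => ?_, hp.bot, hp.top, hp.left, hp.right,
      fun x y h => hp.vsupp y x h.symm, fun x y h => hp.hsupp y x h.symm⟩
    have := hp.cell y x hy hx
    dsimp only
    omega
  · intro p q _ _ h
    rw [Prod.ext_iff] at h
    refine Prod.ext ?_ ?_
    · funext x y; exact congrFun (congrFun h.2 y) x
    · funext x y; exact congrFun (congrFun h.1 y) x

lemma Z_reflect (hu : ∀ x, x < a → u' x = u (a - 1 - x)) (ht : ∀ x, x < a → t' x = t (a - 1 - x)) :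
    Z a b l r u t ≤ Z a b r l u' t' := by
  refine Z_le_of_map (fun p => (fun x y => if x ≤ a then p.1 (a - x) y else 0,
    fun x y => if x < a then p.2 (a - 1 - x) y else 0)) ?_ ?_
  · intro p hp
    constructor
    · intro x y hx hy
      have := hp.cell (a - 1 - x) y (by omega) hy
      rw [show a - 1 - x + 1 = a - x by omega] at this
      simp only [hx.le, hx, if_true, Nat.succ_le_of_lt hx]
      rw [show a - (x + 1) = a - 1 - x by omega]
      omega
    · intro y hy; simpa using hp.right y hy
    · intro y hy; simpa using hp.left y hy
    · intro x hx; simp only [hx, if_true]; rw [hp.bot _ (by omega), hu x hx]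
    · intro x hx; simp only [hx, if_true]; rw [hp.top _ (by omega), ht x hx]
    · intro x y h
      dsimp only
      split_ifs
      · exact hp.hsupp _ _ (by omega)
      · rfl
    · intro x y h
      dsimp only
      split_ifs
      · exact hp.vsupp _ _ (by omega)
      · rfl
  · intro p q hp hq h
    rw [Prod.ext_iff] at h
    refine hp.ext' hq ?_ ?_
    · intro x y hx hy
      have := congrFun (congrFun h.1 (a - x)) y
      simpa [show a - (a - x) = x by omega] using this
    · intro x y hx hy
      have := congrFun (congrFun h.2 (a - 1 - x)) y
      simpa [show a - 1 - (a - 1 - x) = x by omega, show a - 1 - x < a by omega] using this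

/-- Two rectangles sharing a side, with the same protrusions `m` through it, can be tiled
independently. -/
lemma Z_glue (hU : ∀ x, x < a → U x = u x) (hU' : ∀ x, x < a' → U (a + x) = u' x)
    (hT : ∀ x, x < a → T x = t x) (hT' : ∀ x, x < a' → T (a + x) = t' x) :
    Z a b l m u t * Z a' b m r u' t' ≤ Z (a + a') b l r U T := by
  unfold Z
  rw [← Nat.card_prod]
  let f : (ℕ → ℕ → ℕ) × (ℕ → ℕ → ℕ) → (ℕ → ℕ → ℕ) × (ℕ → ℕ → ℕ) →
      (ℕ → ℕ → ℕ) × (ℕ → ℕ → ℕ) := fun p q =>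
    (fun x y => if x ≤ a then p.1 x y else q.1 (x - a) y,
      fun x y => if x < a then p.2 x y else q.2 (x - a) y)
  have hf : ∀ p q, IsTil a b l m u t p → IsTil a' b m r u' t' q →
      IsTil (a + a') b l r U T (f p q) := by
    intro p q hp hq
    have hb : ∀ x y, y < b → a ≤ x → (f p q).1 x y = q.1 (x - a) y := by
      intro x y hy hx
      dsimp only [f]
      split_ifs with h
      · obtain rfl : x = a := by omega
        rw [hp.right y hy, Nat.sub_self, hq.left y hy]
      · rfl
    have ha : ∀ x y, x ≤ a → (f p q).1 x y = p.1 x y := fun x y hx => if_pos hx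
    have hva : ∀ x y, x < a → (f p q).2 x y = p.2 x y := fun x y hx => if_pos hx
    have hvb : ∀ x y, a ≤ x → (f p q).2 x y = q.2 (x - a) y := fun x y hx => if_neg (by omega)
    constructor
    · intro x y hx hy
      rcases Nat.lt_or_ge x a with h | h
      · rw [ha _ _ h.le, ha _ _ h, hva _ _ h, hva _ _ h]
        exact hp.cell x y h hy
      · rw [hb _ _ hy h, hb _ _ hy (by omega), hvb _ _ h, hvb _ _ h]
        have := hq.cell (x - a) y (by omega) hy
        rwa [show x - a + 1 = x + 1 - a by omega] at this
    · intro y hy; rw [ha _ _ (Nat.zero_le _)]; exact hp.left y hy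
    · intro y hy; rw [hb _ _ hy (by omega), Nat.add_sub_cancel_left]; exact hq.right y hy
    · intro x hx
      rcases Nat.lt_or_ge x a with h | h
      · rw [hva _ _ h, hU x h, hp.bot x h]
      · rw [hvb _ _ h, hq.bot _ (by omega), ← hU' _ (by omega), show a + (x - a) = x by omega]
    · intro x hx
      rcases Nat.lt_or_ge x a with h | h
      · rw [hva _ _ h, hT x h, hp.top x h]
      · rw [hvb _ _ h, hq.top _ (by omega), ← hT' _ (by omega), show a + (x - a) = x by omega]
    · intro x y h
      dsimp only [f]
      split_ifs
      · exact hp.hsupp _ _ (by omega)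
      · exact hq.hsupp _ _ (by omega)
    · intro x y h
      dsimp only [f]
      split_ifs
      · exact hp.vsupp _ _ (by omega)
      · exact hq.vsupp _ _ (by omega)
  refine Nat.card_le_card_of_injective
    (fun pq : Til a b l m u t × Til a' b m r u' t' =>
      (⟨f pq.1.1 pq.2.1, hf _ _ pq.1.2 pq.2.2⟩ : Til (a + a') b l r U T)) ?_
  rintro ⟨⟨p, hp⟩, ⟨q, hq⟩⟩ ⟨⟨p', hp'⟩, ⟨q', hq'⟩⟩ h
  have h := Prod.ext_iff.1 (congrArg Subtype.val h)
  have h1 := fun x y => congrFun (congrFun h.1 x) y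
  have h2 := fun x y => congrFun (congrFun h.2 x) y
  dsimp only [f] at h1 h2
  have e1 : p = p' := by
    refine hp.ext' hp' ?_ ?_
    · intro x y hx hy
      simpa [hx] using h1 x y
    · intro x y hx hy
      simpa [hx] using h2 x y
  have e2 : q = q' := by
    refine hq.ext' hq' ?_ ?_
    · intro x y hx hy
      rcases Nat.eq_zero_or_pos x with rfl | h0
      · rw [hq.left y hy, hq'.left y hy]
      · have := h1 (a + x) y
        simpa [show ¬ a + x ≤ a by omega] using this
    · intro x y hx hy
      have := h2 (a + x) y
      simpa using this
  subst e1 e2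
  rfl

/-- The palindromic extension of a boundary condition `u` on `[0, a)` to `[0, 2a)`. -/
def fold (a : ℕ) (u : ℕ → ℕ) : ℕ → ℕ := fun x => if x < a then u x else u (2 * a - 1 - x)

/-- Reflection: gluing a tiling to a mirror image of another one along the right side produces a
tiling of the doubled rectangle whose left and right protrusions are both the old left ones `l`,
and whose bottom and top protrusions are palindromic. -/
lemma Z_double : Z a b l l u t ^ 2 ≤ Z (2 * a) b l l (fold a u) (fold a t) := by
  rw [sq, two_mul]
  calc Z a b l l u t * Z a b l l u t
      ≤ Z a b l l u t * Z a b l l (fun x => u (a - 1 - x)) (fun x => t (a - 1 - x)) :=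
        Nat.mul_le_mul_left _ (Z_reflect (fun _ _ => rfl) (fun _ _ => rfl))
    _ ≤ _ := by
        refine Z_glue ?_ ?_ ?_ ?_ <;> intro x hx <;> simp only [fold]
        · rw [if_pos hx]
        · rw [if_neg (by omega)]; congr 1; omega
        · rw [if_pos hx]
        · rw [if_neg (by omega)]; congr 1; omega

/-- Tilings whose left and right protrusions agree can be repeated horizontally. -/
lemma Z_periodic (n : ℕ) : Z a b l l u t ^ n ≤
    Z (a * n) b l l (fun x => u (x % a)) (fun x => t (x % a)) := by
  induction n with
  | zero =>
    rw [pow_zero]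
    refine Z_pos (p := (fun x y => if x = 0 ∧ y < b then l y else 0, fun _ _ => 0)) ?_
    constructor <;> simp <;> grind
  | succ n ih =>
    rw [pow_succ, Nat.mul_succ]
    refine (Nat.mul_le_mul_right _ ih).trans ?_
    refine Z_glue (fun _ _ => rfl) ?_ (fun _ _ => rfl) ?_ <;> intro x hx <;>
      simp [Nat.mod_eq_of_lt hx]

/-- The tiling of a rectangle of even width by horizontal dominoes. -/
lemma Z_brick (hb : Even a) : 1 ≤ Z a b 0 0 0 0 := by
  obtain ⟨k, rfl⟩ := hb
  refine Z_pos (p := (fun x y => if x ≤ k + k ∧ y < b then x % 2 else 0, fun _ _ => 0)) ?_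
  constructor
  · intro x y hx hy
    simp only [hy, and_true]
    split_ifs <;> omega
  · intro y hy; simp
  · intro y hy; simp only [Pi.zero_apply]; split_ifs <;> omega
  · intro x hx; rfl
  · intro x hx; rfl
  · intro x y h
    exact if_neg (by omega)
  · intro x y h; rfl

/-- Any palindromic boundary condition on a side of length `2L` can be absorbed in an `L × 2L` strip.
The tiling consists of `L` nested U-shaped paths around the midpoint of the absorbing side, the one
issuing from heights `x` and `2L - 1 - x` having its vertical part in column `x`. As the two
ends of a path carry equal data, the number of cells left to be tiled along it is even, and it is
tiled by dominoes laid along the path. -/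
lemma Z_U {L : ℕ} {s : ℕ → ℕ} (hs : ∀ y, s y ≤ 1) :
    1 ≤ Z L (2 * L) 0 (fold L s) 0 0 := by
  refine Z_pos (p := (fun x y => if min y (2 * L - 1 - y) < x ∧ x ≤ L ∧ y < 2 * L then
      (fold L s y + (L - x)) % 2 else 0,
      fun x y => if x < y ∧ y ≤ 2 * L - 1 - x ∧ x < L then (s x + (L - x) + (y - x - 1)) % 2
        else 0)) ?_
  constructor
  · intro x y hx hy
    have h3 := hs x
    dsimp only
    rcases Nat.lt_trichotomy (min y (2 * L - 1 - y)) x with h | h | h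
    · rw [if_pos (by omega), if_pos (by omega), if_neg (by omega), if_neg (by omega)]
      omega
    · have hF : fold L s y = s x := by
        unfold fold
        split_ifs <;> congr 1 <;> omega
      rw [if_neg (by omega), if_pos (by omega), hF]
      rcases Nat.lt_or_ge y L with hyL | hyL
      · rw [if_neg (by omega), if_pos (by omega)]
        omega
      · rw [if_pos (by omega), if_neg (by omega)]
        omega
    · rw [if_neg (by omega), if_neg (by omega), if_pos (by omega), if_pos (by omega)]
      omega
  · intro y hy
    simp
  · intro y hy
    have hF : fold L s y ≤ 1 := by unfold fold; split_ifs <;> exact hs _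
    dsimp only
    rw [if_pos (by omega)]
    omega
  · intro x hx
    simp
  · intro x hx
    simp only [Pi.zero_apply]
    split_ifs <;> omega
  · intro x y h
    dsimp only
    split_ifs <;> omega
  · intro x y h
    dsimp only
    split_ifs <;> omega

end Dimer

/-! ### Comparison of boundary conditions -/

namespace Dimer

/-- Reflecting in both directions makes an `L × L` tiling with boundary condition `(s, s, u, u)` into
a doubly palindromic `2L × 2L` one; these blocks then fit together periodically. -/
lemma Z_core {L : ℕ} (s u : ℕ → ℕ) (m : ℕ) :
    Z L L s s u u ^ (4 * m ^ 2) ≤ Z (2 * L * m) (2 * L * m)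
      (fun y => fold L s (y % (2 * L))) (fun y => fold L s (y % (2 * L)))
      (fun x => fold L u (x % (2 * L))) (fun x => fold L u (x % (2 * L))) := by
  have h1 : Z L L s s u u ^ 4 ≤
      Z (2 * L) (2 * L) (fold L s) (fold L s) (fold L u) (fold L u) := by
    calc Z L L s s u u ^ 4 = (Z L L s s u u ^ 2) ^ 2 := by rw [← pow_mul]
      _ ≤ (Z L (2 * L) (fold L u) (fold L u) s s) ^ 2 :=
        Nat.pow_le_pow_left (Z_double.trans Z_transpose) 2
      _ ≤ _ := Z_double.trans Z_transpose
  calc Z L L s s u u ^ (4 * m ^ 2) = ((Z L L s s u u ^ 4) ^ m) ^ m := by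
        rw [← pow_mul, ← pow_mul]; congr 1; ring
    _ ≤ (Z (2 * L) (2 * L * m) (fun x => fold L u (x % (2 * L)))
          (fun x => fold L u (x % (2 * L))) (fold L s) (fold L s)) ^ m :=
        Nat.pow_le_pow_left (((Nat.pow_le_pow_left h1 m).trans (Z_periodic m)).trans
          Z_transpose) m
    _ ≤ _ := (Z_periodic m).trans Z_transpose

/-- A horizontal strip that absorbs a periodic palindromic boundary condition; its other three sides
are flat. -/
lemma Z_strip {L : ℕ} {s : ℕ → ℕ} (hs : ∀ y, s y ≤ 1) (m : ℕ) :
    1 ≤ Z (2 * L * m) L 0 0 0 (fun y => fold L s (y % (2 * L))) := by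
  have h : 1 ≤ Z (2 * L) L 0 0 0 (fold L s) := (Z_U hs).trans Z_transpose
  calc 1 = 1 ^ m := (one_pow m).symm
    _ ≤ _ := (Nat.pow_le_pow_left h m).trans (Z_periodic m)

/-- The vertical version of `Z_strip`. -/
lemma Z_strip' {L : ℕ} {s : ℕ → ℕ} (hs : ∀ y, s y ≤ 1) (m : ℕ) :
    1 ≤ Z L (2 * L * m) 0 (fun y => fold L s (y % (2 * L))) 0 0 :=
  (Z_strip hs m).trans Z_transpose

/-- The boundary condition `U` on an interval of length `A`, extended by `0` by `L` cells each way. -/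
def pad (L A : ℕ) (U : ℕ → ℕ) : ℕ → ℕ := fun x => if x < L ∨ A + L ≤ x then 0 else U (x - L)

/-- Adding to a rectangle one strip of width `L` on its left and one on its right. -/
lemma Z_pad {L A b : ℕ} {l r s s' u t : ℕ → ℕ}
    (h1 : 1 ≤ Z L b l s 0 0) (h2 : 1 ≤ Z L b s' r 0 0) :
    Z A b s s' u t ≤ Z (L + A + L) b l r (pad L A u) (pad L A t) := by
  calc Z A b s s' u t ≤ Z L b l s 0 0 * Z A b s s' u t :=
        Nat.le_mul_of_pos_left _ h1
    _ ≤ Z (L + A) b l s' (pad L A u) (pad L A t) := by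
      refine Z_glue ?_ ?_ ?_ ?_ <;> intro x hx <;> simp only [pad, Pi.zero_apply]
      · rw [if_pos (Or.inl hx)]
      · rw [if_neg (by omega)]; simp
      · rw [if_pos (Or.inl hx)]
      · rw [if_neg (by omega)]; simp
    _ ≤ Z (L + A) b l s' (pad L A u) (pad L A t) * Z L b s' r 0 0 :=
        Nat.le_mul_of_pos_right _ h2
    _ ≤ _ := by
      refine Z_glue (fun _ _ => rfl) ?_ (fun _ _ => rfl) ?_ <;> intro x hx <;>
        simp only [pad, Pi.zero_apply] <;> exact if_pos (by omega)

lemma Z_zero_reflect {L b : ℕ} {s : ℕ → ℕ} (h : 1 ≤ Z L b 0 s 0 0) : 1 ≤ Z L b s 0 0 0 :=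
  h.trans (Z_reflect (fun _ _ => rfl) (fun _ _ => rfl))

/-- Independence of the boundary condition to leading order: `4m²` independent tilings of the
`L × L` square, all with the same protrusions `(s, s, u, u)`, extend to one ordinary tiling of a square
of side `2L(m + 1)`, by reflection and by a frame of width `L` that absorbs the protrusions. -/
theorem Z_pow_le {L : ℕ} (hL : Even L) {s u : ℕ → ℕ} (hs : ∀ y, s y ≤ 1) (hu : ∀ y, u y ≤ 1)
    (m : ℕ) : Z L L s s u u ^ (4 * m ^ 2) ≤
      Z (2 * L * (m + 1)) (2 * L * (m + 1)) 0 0 0 0 := by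
  refine (Z_core s u m).trans ?_
  have e : 2 * L * (m + 1) = L + 2 * L * m + L := by ring
  rw [e]
  have hp0 : pad L (2 * L * m) 0 = 0 := by
    funext x; simp [pad]
  set A := 2 * L * m
  refine (Z_pad (Z_strip' hs m) (Z_zero_reflect (Z_strip' hs m))).trans ?_
  refine Z_transpose.trans ?_
  have hW : 1 ≤ Z L (L + A + L) 0 (pad L A fun x => fold L u (x % (2 * L))) 0 0 := by
    have := Z_pad (L := L) (b := L) (Z_brick hL) (Z_brick hL) (A := A) (u := 0)
      (t := fun x => fold L u (x % (2 * L)))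
    rw [hp0] at this
    exact ((Z_strip hu m).trans this).trans Z_transpose
  have := Z_pad (A := A) (u := 0) (t := 0) hW (Z_zero_reflect hW)
  rwa [hp0] at this

end Dimer

/-! ### Torus matchings and tilings of the square -/

namespace Dimer
open SimpleGraph

variable {L : ℕ} [NeZero L]

lemma cyc_adj (hL : 3 ≤ L) (i w : Fin L) :
    (cycleGraph L).Adj i w ↔ w = i + 1 ∨ w = i - 1 := by
  obtain ⟨k, rfl⟩ : ∃ k, L = k + 2 := ⟨L - 2, by omega⟩
  rw [cycleGraph_adj, or_comm, sub_eq_iff_eq_add, sub_eq_iff_eq_add, eq_sub_iff_add_eq, add_comm 1 i, add_comm 1 w]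
  rw [eq_comm (a := i)]

lemma fin_add_one_ne_sub (hL : 3 ≤ L) (i : Fin L) : i + 1 ≠ i - 1 := by
  obtain ⟨k, rfl⟩ : ∃ k, L = k + 3 := ⟨L - 3, by omega⟩
  intro h
  have h2 : (1 : Fin (k + 3)) + 1 = 0 := by
    have := congrArg (fun z => z - i + 1) h
    simpa [sub_eq_add_neg, add_assoc, add_comm, add_left_comm] using this
  have h3 := congrArg Fin.val h2
  rw [Fin.val_add] at h3
  have h1 : ((1 : Fin (k + 3)) : ℕ) = 1 := by simp
  rw [h1, Nat.mod_eq_of_lt (by omega)] at h3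
  simp at h3

lemma fin_add_one_ne (hL : 3 ≤ L) (i : Fin L) : i + 1 ≠ i := by
  obtain ⟨k, rfl⟩ : ∃ k, L = k + 3 := ⟨L - 3, by omega⟩
  simp

lemma fin_sub_one_ne (hL : 3 ≤ L) (i : Fin L) : i - 1 ≠ i := by
  obtain ⟨k, rfl⟩ : ∃ k, L = k + 3 := ⟨L - 3, by omega⟩
  simp

lemma fin_val_add_one (hL : 3 ≤ L) (i : Fin L) :
    (i + 1).val = if i.val + 1 = L then 0 else i.val + 1 := by
  have := i.2
  have h1 : (1 : Fin L).val = 1 := by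
    obtain ⟨k, rfl⟩ : ∃ k, L = k + 3 := ⟨L - 3, by omega⟩
    simp
  rw [Fin.val_add, h1]
  split_ifs with h
  · rw [h, Nat.mod_self]
  · exact Nat.mod_eq_of_lt (by omega)

lemma fin_val_sub_one (hL : 3 ≤ L) (i : Fin L) :
    (i - 1).val = if i.val = 0 then L - 1 else i.val - 1 := by
  have h := fin_val_add_one hL (i - 1)
  rw [sub_add_cancel] at h
  have := (i - 1).2
  split_ifs at h ⊢ <;> omega

lemma ofNat_val (i : Fin L) : Fin.ofNat L i.val = i := by
  ext; simp [Fin.ofNat, Nat.mod_eq_of_lt i.2]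

lemma ofNat_succ (hL : 3 ≤ L) (x : ℕ) : Fin.ofNat L (x + 1) = Fin.ofNat L x + 1 := by
  obtain ⟨k, rfl⟩ : ∃ k, L = k + 3 := ⟨L - 3, by omega⟩
  ext; simp [Fin.ofNat, Fin.val_add]

lemma ofNat_self : Fin.ofNat L L = 0 := by
  ext; simp [Fin.ofNat]

/-- The toroidal square lattice `C_L □ C_L`. -/
abbrev Tor (L : ℕ) : SimpleGraph (Fin L × Fin L) := cycleGraph L □ cycleGraph L

lemma tor_adj (hL : 3 ≤ L) (p q : Fin L × Fin L) : (Tor L).Adj p q ↔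
    q = (p.1 + 1, p.2) ∨ q = (p.1 - 1, p.2) ∨ q = (p.1, p.2 + 1) ∨ q = (p.1, p.2 - 1) := by
  rw [boxProd_adj, cyc_adj hL, cyc_adj hL]
  rcases p with ⟨i, j⟩
  rcases q with ⟨i', j'⟩
  simp only [Prod.mk.injEq]
  tauto

open Classical in
/-- The edge indicators of a torus matching, the torus being cut open along the edges that wrap
around; such an edge appears twice, as a protrusion through both of the opposite sides. -/
noncomputable def edges (M : (Tor L).Subgraph) : (ℕ → ℕ → ℕ) × (ℕ → ℕ → ℕ) :=
  (fun x y => if x ≤ L ∧ y < L ∧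
      M.Adj (Fin.ofNat L x - 1, Fin.ofNat L y) (Fin.ofNat L x, Fin.ofNat L y) then 1 else 0,
    fun x y => if x < L ∧ y ≤ L ∧
      M.Adj (Fin.ofNat L x, Fin.ofNat L y - 1) (Fin.ofNat L x, Fin.ofNat L y) then 1 else 0)

lemma edges_isTil (hL : 3 ≤ L) {M : (Tor L).Subgraph} (hM : M.IsPerfectMatching)
    {s u : ℕ → ℕ} (hs : ∀ y, y < L → (edges M).1 0 y = s y)
    (hu : ∀ x, x < L → (edges M).2 x 0 = u x) : IsTil L L s s u u (edges M) := by
  classical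
  rw [Subgraph.isPerfectMatching_iff] at hM
  constructor
  · intro x y hx hy
    simp only [edges, hx, hy, hx.le, hy.le, Nat.succ_le_of_lt hx, Nat.succ_le_of_lt hy, true_and,
      ofNat_succ hL, add_sub_cancel_right]
    generalize Fin.ofNat L x = i
    generalize Fin.ofNat L y = j
    obtain ⟨w, hw, hun⟩ := hM (i, j)
    have hA : ∀ q, M.Adj (i, j) q ↔ w = q := fun q => ⟨fun h => (hun q h).symm, fun h => h ▸ hw⟩
    have hA' : ∀ q, M.Adj q (i, j) ↔ w = q := fun q => by rw [M.adj_comm, hA]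
    simp only [hA, hA']
    have a1 := fin_add_one_ne_sub hL i
    have a2 := fin_add_one_ne_sub hL j
    have a3 := fin_add_one_ne hL i
    have a4 := fin_add_one_ne hL j
    have a5 := fin_sub_one_ne hL i
    have a6 := fin_sub_one_ne hL j
    rcases (tor_adj hL _ _).1 hw.adj_sub with h | h | h | h <;> subst h <;>
      simp [a1, a2, a3, a4, a5, a6, a1.symm, a2.symm, a3.symm, a4.symm, a5.symm, a6.symm]
  · exact hs
  · intro y hy
    rw [← hs y hy]
    simp [edges, hy]
  · exact hu
  · intro y hy
    rw [← hu y hy]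
    simp [edges, hy]
  · intro x y h
    exact if_neg (by omega)
  · intro x y h
    exact if_neg (by omega)

lemma edges_inj (hL : 3 ≤ L) {M M' : (Tor L).Subgraph} (hM : M.IsPerfectMatching)
    (hM' : M'.IsPerfectMatching) (h : edges M = edges M') : M = M' := by
  classical
  have h1 := fun x y => congrFun (congrFun (congrArg Prod.fst h) x) y
  have h2 := fun x y => congrFun (congrFun (congrArg Prod.snd h) x) y
  have k1 : ∀ i j : Fin L, M.Adj (i - 1, j) (i, j) ↔ M'.Adj (i - 1, j) (i, j) := by
    intro i j
    have := h1 i.val j.val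
    simp only [edges, i.2.le, j.2, true_and, ofNat_val] at this
    split_ifs at this <;> tauto
  have k2 : ∀ i j : Fin L, M.Adj (i, j - 1) (i, j) ↔ M'.Adj (i, j - 1) (i, j) := by
    intro i j
    have := h2 i.val j.val
    simp only [edges, i.2, j.2.le, true_and, ofNat_val] at this
    split_ifs at this <;> tauto
  have key : ∀ p q, (Tor L).Adj p q → (M.Adj p q ↔ M'.Adj p q) := by
    rintro ⟨i, j⟩ q hq
    rcases (tor_adj hL _ _).1 hq with rfl | rfl | rfl | rfl
    · simpa using k1 (i + 1) j
    · rw [M.adj_comm, M'.adj_comm]; exact k1 i j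
    · simpa using k2 i (j + 1)
    · rw [M.adj_comm, M'.adj_comm]; exact k2 i j
  refine Subgraph.ext ?_ ?_
  · rw [hM.2.verts_eq_univ, hM'.2.verts_eq_univ]
  · funext p q
    refine propext ⟨fun h => (key p q h.adj_sub).1 h, fun h => (key p q h.adj_sub).2 h⟩

/-- Cutting the torus open along two cycles of edges gives a tiling of the `L × L` square with equal
protrusions through opposite sides, and there are at most `4 ^ L` possibilities for those. -/
theorem torus_upper (hL : 3 ≤ L) (B : ℕ)
    (hB : ∀ s u : ℕ → ℕ, (∀ y, s y ≤ 1) → (∀ y, u y ≤ 1) → Z L L s s u u ≤ B) :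
    Nat.card {M : (Tor L).Subgraph // M.IsPerfectMatching} ≤ B * 4 ^ L := by
  classical
  have := Fintype.ofFinite {M : (Tor L).Subgraph // M.IsPerfectMatching}
  rw [Nat.card_eq_fintype_card, ← Finset.card_univ]
  let f : {M : (Tor L).Subgraph // M.IsPerfectMatching} → (Fin L → Bool) × (Fin L → Bool) :=
    fun M => (fun j => decide ((edges M.1).1 0 j = 1), fun i => decide ((edges M.1).2 i 0 = 1))
  have hc : (4 : ℕ) ^ L = (Finset.univ : Finset ((Fin L → Bool) × (Fin L → Bool))).card := by
    simp [← mul_pow]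
  rw [hc]
  refine Finset.card_le_mul_card_image_of_maps_to (f := f) (fun _ _ => Finset.mem_univ _) B ?_
  rintro ⟨s, u⟩ -
  let e : (Fin L → Bool) → ℕ → ℕ := fun s y => if h : y < L then (s ⟨y, h⟩).toNat else 0
  have he : ∀ s y, e s y ≤ 1 := by
    intro s y
    dsimp only [e]
    split_ifs
    · exact Bool.toNat_le _
    · omega
  refine le_trans ?_ (hB (e s) (e u) (he s) (he u))
  rw [← Fintype.card_subtype, ← Nat.card_eq_fintype_card]
  refine Nat.card_le_card_of_injective (fun M => ⟨edges M.1.1, edges_isTil hL M.1.2 ?_ ?_⟩) ?_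
  · intro y hy
    have h1 := congrFun (Prod.ext_iff.1 M.2).1 ⟨y, hy⟩
    have h2 : e s y = (s ⟨y, hy⟩).toNat := dif_pos hy
    rw [h2]
    dsimp only at h1
    rw [← h1]
    simp only [f, edges]
    split_ifs <;> simp
  · intro x hx
    have h1 := congrFun (Prod.ext_iff.1 M.2).2 ⟨x, hx⟩
    have h2 : e u x = (u ⟨x, hx⟩).toNat := dif_pos hx
    rw [h2]
    dsimp only at h1
    rw [← h1]
    simp only [f, edges]
    split_ifs <;> simp
  · intro M M' h
    exact Subtype.ext (Subtype.ext (edges_inj hL M.1.2 M'.1.2 (congrArg Subtype.val h)))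

/-- The adjacency relation of the torus matching defined by a tiling `p` of the `L × L` square. -/
def PAdj (p : (ℕ → ℕ → ℕ) × (ℕ → ℕ → ℕ)) (a q : Fin L × Fin L) : Prop :=
  (q = (a.1 + 1, a.2) ∧ p.1 (a.1 + 1) a.2 = 1) ∨ (q = (a.1 - 1, a.2) ∧ p.1 a.1 a.2 = 1) ∨
  (q = (a.1, a.2 + 1) ∧ p.2 a.1 (a.2 + 1) = 1) ∨ (q = (a.1, a.2 - 1) ∧ p.2 a.1 a.2 = 1)

lemma PAdj.symm (hL : 3 ≤ L) {p : (ℕ → ℕ → ℕ) × (ℕ → ℕ → ℕ)} (hp : IsTil L L 0 0 0 0 p)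
    {a q : Fin L × Fin L} (h : PAdj p a q) : PAdj p q a := by
  rcases a with ⟨i, j⟩
  have hi := i.2
  have hj := j.2
  have e1 := hp.left j hj
  have e2 := hp.right j hj
  have e3 := hp.bot i hi
  have e4 := hp.top i hi
  simp only [Pi.zero_apply] at e1 e2 e3 e4
  rcases h with ⟨rfl, h⟩ | ⟨rfl, h⟩ | ⟨rfl, h⟩ | ⟨rfl, h⟩
  · refine Or.inr (Or.inl ⟨by simp, ?_⟩)
    dsimp only at h ⊢
    rw [fin_val_add_one hL]
    split_ifs with h'
    · rw [h'] at h; omega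
    · exact h
  · refine Or.inl ⟨by simp, ?_⟩
    dsimp only at h ⊢
    rw [fin_val_sub_one hL]
    split_ifs with h'
    · rw [h'] at h; omega
    · rwa [Nat.sub_add_cancel (by omega)]
  · refine Or.inr (Or.inr (Or.inr ⟨by simp, ?_⟩))
    dsimp only at h ⊢
    rw [fin_val_add_one hL]
    split_ifs with h'
    · rw [h'] at h; omega
    · exact h
  · refine Or.inr (Or.inr (Or.inl ⟨by simp, ?_⟩))
    dsimp only at h ⊢
    rw [fin_val_sub_one hL]
    split_ifs with h'
    · rw [h'] at h; omega
    · rwa [Nat.sub_add_cancel (by omega)]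

/-- An ordinary tiling of the square, seen as a subgraph of the torus. -/
def ofTil (hL : 3 ≤ L) (p : Til L L 0 0 0 0) : (Tor L).Subgraph where
  verts := Set.univ
  Adj := PAdj p.1
  adj_sub h := by
    rw [tor_adj hL]
    rcases h with ⟨h, -⟩ | ⟨h, -⟩ | ⟨h, -⟩ | ⟨h, -⟩ <;> simp [h]
  edge_vert _ := Set.mem_univ _
  symm := ⟨fun _ _ h => h.symm hL p.2⟩

theorem torus_lower (hL : 3 ≤ L) :
    Z L L 0 0 0 0 ≤ Nat.card {M : (Tor L).Subgraph // M.IsPerfectMatching} := by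
  refine Nat.card_le_card_of_injective (fun p => ⟨ofTil hL p, ?_⟩) ?_
  · rw [Subgraph.isPerfectMatching_iff]
    rintro ⟨i, j⟩
    have hc := p.2.cell i j i.2 j.2
    change ∃! q, PAdj p.1 (i, j) q
    simp only [PAdj]
    have : p.1.1 (i + 1) j = 1 ∧ p.1.1 i j = 0 ∧ p.1.2 i (j + 1) = 0 ∧ p.1.2 i j = 0 ∨
      p.1.1 (i + 1) j = 0 ∧ p.1.1 i j = 1 ∧ p.1.2 i (j + 1) = 0 ∧ p.1.2 i j = 0 ∨
      p.1.1 (i + 1) j = 0 ∧ p.1.1 i j = 0 ∧ p.1.2 i (j + 1) = 1 ∧ p.1.2 i j = 0 ∨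
      p.1.1 (i + 1) j = 0 ∧ p.1.1 i j = 0 ∧ p.1.2 i (j + 1) = 0 ∧ p.1.2 i j = 1 := by omega
    rcases this with ⟨h1, h2, h3, h4⟩ | ⟨h1, h2, h3, h4⟩ | ⟨h1, h2, h3, h4⟩ | ⟨h1, h2, h3, h4⟩ <;>
      simp [h1, h2, h3, h4]
  · intro p q h
    have h : ∀ a b : Fin L × Fin L, PAdj p.1 a b ↔ PAdj q.1 a b := by
      intro a b
      have := congrArg (fun M => M.1.Adj a b) h
      exact iff_of_eq this
    have key : ∀ i j : Fin L, (p.1.1 i j = 1 ↔ q.1.1 i j = 1) ∧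
        (p.1.2 i j = 1 ↔ q.1.2 i j = 1) := by
      intro i j
      have a1 := fin_add_one_ne_sub hL i
      have a2 := fin_add_one_ne_sub hL j
      have a5 := fin_sub_one_ne hL i
      have a6 := fin_sub_one_ne hL j
      have k1 := h (i, j) (i - 1, j)
      have k2 := h (i, j) (i, j - 1)
      simp only [PAdj, Prod.mk.injEq, a1, a2, a5, a6, a1.symm, a2.symm, a5.symm, a6.symm,
        false_and, and_false, false_or, or_false, true_and, and_true] at k1 k2
      exact ⟨k1, k2⟩
    refine Subtype.ext (p.2.ext' q.2 ?_ ?_)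
    · intro x y hx hy
      rcases hx.lt_or_eq with hx | rfl
      · have := p.2.cell x y hx hy
        have := q.2.cell x y hx hy
        have := (key ⟨x, hx⟩ ⟨y, hy⟩).1
        dsimp only at this
        omega
      · rw [p.2.right y hy, q.2.right y hy]
    · intro x y hx hy
      rcases hy.lt_or_eq with hy | rfl
      · have := p.2.cell x y hx hy
        have := q.2.cell x y hx hy
        have := (key ⟨x, hx⟩ ⟨y, hy⟩).2
        dsimp only at this
        omega
      · rw [p.2.top x hx, q.2.top x hx]

end Dimer

/-! ### Connectedness under flips -/

namespace Dimer

/-- A pair of (horizontal, vertical) domino indicator functions, as in `IsTil`. -/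
abbrev Cfg := (ℕ → ℕ → ℕ) × (ℕ → ℕ → ℕ)

/-- `p` encodes an ordinary domino tiling of the `a × b` rectangle, without protrusions. -/
abbrev PT (a b : ℕ) (p : Cfg) : Prop := IsTil a b 0 0 0 0 p

/-- Replace the tiling inside the `2 × 2` block with lower left cell `(x, y)` by two horizontal
(`k = 1`) or two vertical (`k = 0`) dominoes. -/
def setB (p : Cfg) (x y k : ℕ) : Cfg :=
  (fun c d => if c = x + 1 ∧ (d = y ∨ d = y + 1) then k else p.1 c d,
    fun c d => if d = y + 1 ∧ (c = x ∨ c = x + 1) then 1 - k else p.2 c d)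

/-- The `2 × 2` block with lower left cell `(x, y)` is covered by two horizontal (`k = 1`) or
two vertical (`k = 0`) dominoes. -/
structure Block (p : Cfg) (x y k : ℕ) : Prop where
  h0 : p.1 (x + 1) y = k
  h1 : p.1 (x + 1) (y + 1) = k
  v0 : p.2 x (y + 1) = 1 - k
  v1 : p.2 (x + 1) (y + 1) = 1 - k

/-- `q` arises from the tiling `p` by rotating the two dominoes of the block at `(x, y)`. -/
structure Flip (a b : ℕ) (p q : Cfg) (x y k : ℕ) : Prop where
  pt : PT a b p
  hx : x + 1 < a
  hy : y + 1 < b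
  hk : k ≤ 1
  blk : Block p x y k
  eq : q = setB p x y (1 - k)

lemma Flip.pt' {a b x y k : ℕ} {p q : Cfg} (h : Flip a b p q x y k) : PT a b q := by
  obtain ⟨hp, hx, hy, hk, ⟨b1, b2, b3, b4⟩, rfl⟩ := h
  constructor
  · intro x' y' hx' hy'
    have := hp.cell x' y' hx' hy'
    by_cases hxx : x' = x
    · subst hxx
      by_cases hyy : y' = y
      · subst hyy
        simp [setB]; omega
      · by_cases hyy : y' = y + 1
        · subst hyy
          simp [setB]; omega
        · simp [setB]; grind
    · by_cases hxx : x' = x + 1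
      · subst hxx
        by_cases hyy : y' = y
        · subst hyy
          simp [setB]; omega
        · by_cases hyy : y' = y + 1
          · subst hyy
            simp [setB]; omega
          · simp [setB]; grind
      · simp [setB]; grind
  · intro y' h'
    have := hp.left y' h'
    simpa [setB] using this
  · intro y' h'
    have := hp.right y' h'
    simp only [setB]
    rwa [if_neg (by omega)]
  · intro x' h'
    have := hp.bot x' h'
    simpa [setB] using this
  · intro x' h'
    have := hp.top x' h'
    simp only [setB]
    rwa [if_neg (by omega)]
  · intro x' y' h'
    simp only [setB]
    rw [if_neg (by omega)]
    exact hp.hsupp _ _ h'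
  · intro x' y' hxy
    simp only [setB]
    rw [if_neg (by omega)]
    exact hp.vsupp _ _ hxy

/-- Tilings connected by a sequence of flips. -/
abbrev Reach (a b : ℕ) : Cfg → Cfg → Prop :=
  Relation.ReflTransGen (fun p q => ∃ x y k, Flip a b p q x y k)

/-- `p` and `q` agree on all dominoes that do not lie in the quadrant with corner cell `(x, y)`. -/
def Agree (x y : ℕ) (p q : Cfg) : Prop :=
  (∀ c d, d < y ∨ c ≤ x → q.1 c d = p.1 c d) ∧
  (∀ c d, d ≤ y ∨ c < x → q.2 c d = p.2 c d)

/-- A vertical domino at the corner cell `(x, y)` can be made horizontal by flips inside the quadrant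
above and to the right of it, provided that `(x + 1, y)` is not covered from below. If the domino on
`(x + 1, y)` is vertical, one flip suffices. Otherwise that domino is horizontal, and a horizontal
domino has to be created just above it; this is the same problem at `(x + 1, y + 1)`, hence the
induction, along a staircase that must end inside the rectangle. -/
lemma stair {a b : ℕ} (n : ℕ) : ∀ x y p, a - x ≤ n → PT a b p → x + 1 < a → y + 1 < b →
    p.2 x (y + 1) = 1 → p.2 (x + 1) y = 0 →
    ∃ q, Reach a b p q ∧ PT a b q ∧ q.1 (x + 1) y = 1 ∧ Agree x y p q := by
  induction n with
  | zero => intro x y p h; omega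
  | succ n ih =>
    intro x y p hn hp hx hy hv hv'
    have c00 := hp.cell x y (by omega) (by omega)
    have c10 := hp.cell (x + 1) y (by omega) (by omega)
    have c01 := hp.cell x (y + 1) (by omega) (by omega)
    have c11 := hp.cell (x + 1) (y + 1) (by omega) (by omega)
    -- a vertical pair in the corner block is flipped directly
    have fin : ∀ q, Reach a b p q → PT a b q → q.2 x (y + 1) = 1 → q.2 (x + 1) (y + 1) = 1 →
        Agree x y p q → ∃ q, Reach a b p q ∧ PT a b q ∧ q.1 (x + 1) y = 1 ∧ Agree x y p q := by
      intro q hr hq h1 h2 hag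
      have d00 := hq.cell x y (by omega) (by omega)
      have d01 := hq.cell x (y + 1) (by omega) (by omega)
      have hf : Flip a b q (setB q x y (1 - 0)) x y 0 :=
        ⟨hq, hx, hy, by omega, ⟨by omega, by omega, by omega, by omega⟩, rfl⟩
      refine ⟨_, hr.tail ⟨x, y, 0, hf⟩, hf.pt', by simp [setB], ?_, ?_⟩
      · intro x' y' h
        rw [← hag.1 x' y' h]
        exact if_neg (by omega)
      · intro x' y' h
        rw [← hag.2 x' y' h]
        exact if_neg (by omega)
    by_cases hV : p.2 (x + 1) (y + 1) = 1
    · exact fin p .refl hp hv hV ⟨fun _ _ _ => rfl, fun _ _ _ => rfl⟩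
    have hH : p.1 (x + 1 + 1) y = 1 := by omega
    have hx2 : x + 2 < a := by
      by_contra hc
      have := hp.right y (by omega)
      rw [show a = x + 1 + 1 by omega, hH] at this
      simp at this
    have c20 := hp.cell (x + 1 + 1) y (by omega) (by omega)
    have mid : ∃ q, Reach a b p q ∧ PT a b q ∧ q.1 (x + 1 + 1) (y + 1) = 1 ∧
        Agree (x + 1) (y + 1) p q := by
      by_cases hH' : p.1 (x + 1 + 1) (y + 1) = 1
      · exact ⟨p, .refl, hp, hH', fun _ _ _ => rfl, fun _ _ _ => rfl⟩
      have hV' : p.2 (x + 1) (y + 1 + 1) = 1 := by omega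
      have hy2 : y + 1 + 1 < b := by
        by_contra hc
        have := hp.top (x + 1) (by omega)
        rw [show b = y + 1 + 1 by omega, hV'] at this
        simp at this
      exact ih (x + 1) (y + 1) p (by omega) hp hx2 hy2 hV' (by omega)
    obtain ⟨q, hr, hq, hqh, hag⟩ := mid
    have e1 := hag.1 (x + 1 + 1) y (by omega)
    have e2 := hag.2 x (y + 1) (by omega)
    have d10 := hq.cell (x + 1) y (by omega) (by omega)
    have d20 := hq.cell (x + 1 + 1) y (by omega) (by omega)
    have hf : Flip a b q (setB q (x + 1) y (1 - 1)) (x + 1) y 1 :=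
      ⟨hq, hx2, hy, le_rfl, ⟨by omega, by omega, by omega, by omega⟩, rfl⟩
    refine fin _ (hr.tail ⟨_, _, _, hf⟩) hf.pt' ?_ (by simp [setB]) ⟨?_, ?_⟩
    · simp [setB, e2, hv]
    · intro x' y' h
      rw [← hag.1 x' y' (by omega)]
      exact if_neg (by omega)
    · intro x' y' h
      rw [← hag.2 x' y' (by omega)]
      exact if_neg (by omega)

/-- The tiling of a rectangle of even width by horizontal dominoes. -/
def brick (a b : ℕ) : Cfg := (fun x y => if x < a ∧ y < b then x % 2 else 0, fun _ _ => 0)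

lemma brick_pt (w b : ℕ) : PT (2 * w) b (brick (2 * w) b) := by
  constructor
  · intro x y hx hy
    simp only [brick, hy, and_true]
    split_ifs <;> omega
  · intro y hy; simp [brick]
  · intro y hy; simp [brick]
  · intro x hx; rfl
  · intro x hx; rfl
  · intro x y h
    exact if_neg (by omega)
  · intro x y h; rfl

/-- Putting the dominoes of the brick tiling in place one by one, row by row from the bottom; `k` is
the number of dominoes already in place. -/
lemma reach_prefix {w b : ℕ} {p : Cfg} (hp : PT (2 * w) b p) (k : ℕ) :
    ∃ q, Reach (2 * w) b p q ∧ PT (2 * w) b q ∧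
      ∀ i j, i < w → j < b → j * w + i < k → q.1 (2 * i + 1) j = 1 := by
  induction k with
  | zero => exact ⟨p, .refl, hp, by simp⟩
  | succ k ih =>
    obtain ⟨q, hr, hq, hk⟩ := ih
    by_cases hk1 : ∃ i j, i < w ∧ j < b ∧ j * w + i = k
    swap
    · refine ⟨q, hr, hq, fun i j hi hj h => hk i j hi hj ?_⟩
      by_contra hc
      exact hk1 ⟨i, j, hi, hj, by omega⟩
    obtain ⟨i, j, hi, hj, hij⟩ := hk1
    have lex : ∀ i' j', i' < w → j' * w + i' ≤ k → j' < j ∨ (j' = j ∧ i' ≤ i) := by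
      intro i' j' hi' h
      rcases Nat.lt_trichotomy j' j with h1 | h1 | h1
      · exact Or.inl h1
      · subst h1; exact Or.inr ⟨rfl, by omega⟩
      · have : (j + 1) * w ≤ j' * w := Nat.mul_le_mul_right _ h1
        rw [Nat.add_mul, one_mul] at this
        omega
    suffices h : ∃ q', Reach (2 * w) b q q' ∧ PT (2 * w) b q' ∧ q'.1 (2 * i + 1) j = 1 ∧
        Agree (2 * i) j q q' by
      obtain ⟨q', hr', hq', hh, hag⟩ := h
      refine ⟨q', hr.trans hr', hq', fun i' j' hi' hj' h => ?_⟩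
      rcases Nat.lt_or_ge (j' * w + i') k with h' | h'
      · rcases lex i' j' hi' h'.le with h1 | ⟨rfl, h1⟩
        · rw [hag.1 _ _ (Or.inl h1)]; exact hk i' j' hi' hj' h'
        · rw [hag.1 _ _ (by omega)]; exact hk i' j' hi' hj' h'
      · rcases lex i' j' hi' (by omega) with h1 | ⟨rfl, h1⟩
        · have : (j' + 1) * w ≤ j * w := Nat.mul_le_mul_right _ h1
          rw [Nat.add_mul, one_mul] at this
          omega
        · obtain rfl : i' = i := by omega
          exact hh
    by_cases hdone : q.1 (2 * i + 1) j = 1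
    · exact ⟨q, .refl, hq, hdone, fun _ _ _ => rfl, fun _ _ _ => rfl⟩
    have c := hq.cell (2 * i) j (by omega) hj
    have hl : q.1 (2 * i) j = 0 := by
      rcases Nat.eq_zero_or_pos i with rfl | h0
      · exact hq.left j hj
      · have := hk (i - 1) j (by omega) hj (by omega)
        have c' := hq.cell (2 * (i - 1) + 1) j (by omega) hj
        rw [show 2 * (i - 1) + 1 + 1 = 2 * i by omega] at c'
        omega
    have hb : q.2 (2 * i) j = 0 ∧ q.2 (2 * i + 1) j = 0 := by
      rcases Nat.eq_zero_or_pos j with rfl | h0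
      · exact ⟨hq.bot _ (by omega), hq.bot _ (by omega)⟩
      · obtain ⟨j, rfl⟩ : ∃ j', j = j' + 1 := ⟨j - 1, by omega⟩
        rw [Nat.add_mul, one_mul] at hij
        have := hk i j hi (by omega) (by omega)
        have c' := hq.cell (2 * i) j (by omega) (by omega)
        have c'' := hq.cell (2 * i + 1) j (by omega) (by omega)
        omega
    have hv : q.2 (2 * i) (j + 1) = 1 := by omega
    have hj1 : j + 1 < b := by
      by_contra hc
      have := hq.top (2 * i) (by omega)
      rw [show b = j + 1 by omega, hv] at this
      simp at this
    exact stair _ (2 * i) j q le_rfl hq (by omega) hj1 hv hb.2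

/-- The flip graph of the tilings of a rectangle of even width is connected. -/
theorem reach_brick {w b : ℕ} {p : Cfg} (hp : PT (2 * w) b p) :
    Reach (2 * w) b p (brick (2 * w) b) := by
  obtain ⟨q, hr, hq, hk⟩ := reach_prefix hp (b * w)
  have hk' : ∀ i j, i < w → j < b → q.1 (2 * i + 1) j = 1 := by
    intro i j hi hj
    refine hk i j hi hj ?_
    have : (j + 1) * w ≤ b * w := Nat.mul_le_mul_right _ hj
    rw [Nat.add_mul, one_mul] at this
    omega
  have hl : ∀ i j, i < w → j < b → q.1 (2 * i) j = 0 ∧ q.2 (2 * i) j = 0 ∧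
      q.2 (2 * i) (j + 1) = 0 ∧ q.2 (2 * i + 1) j = 0 ∧ q.2 (2 * i + 1) (j + 1) = 0 := by
    intro i j hi hj
    have := hk' i j hi hj
    have c' := hq.cell (2 * i) j (by omega) (by omega)
    have c'' := hq.cell (2 * i + 1) j (by omega) (by omega)
    omega
  have : q = brick (2 * w) b := by
    refine hq.ext' (brick_pt w b) ?_ ?_
    · intro x y hx hy
      rcases hx.lt_or_eq with hx | rfl
      · simp only [brick, hx, hy, and_self, if_true]
        rcases Nat.even_or_odd' x with ⟨i, rfl | rfl⟩
        · rw [(hl i y (by omega) hy).1]; omega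
        · rw [hk' i y (by omega) hy]; omega
      · rw [hq.right y hy]; simp [brick]
    · intro x y hx hy
      rcases hy.lt_or_eq with hy | rfl
      · simp only [brick]
        rcases Nat.even_or_odd' x with ⟨i, rfl | rfl⟩
        · exact (hl i y (by omega) hy).2.1
        · exact (hl i y (by omega) hy).2.2.2.1
      · rw [hq.top x hx]; simp [brick]
  exact this ▸ hr

end Dimer

/-! ### Kasteleyn weights -/

namespace Dimer
open Equiv Complex

/-- The cells of the `a × b` rectangle. -/
abbrev V (a b : ℕ) := Fin a × Fin b

variable {a b : ℕ}

/-- The cells `v` and `w` are covered by the same domino of `p`. -/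
def Link (p : Cfg) (v w : V a b) : Prop :=
  (w.1.val = v.1 + 1 ∧ w.2.val = v.2 ∧ p.1 (v.1 + 1) v.2 = 1) ∨
  (v.1.val = w.1 + 1 ∧ w.2.val = v.2 ∧ p.1 v.1 v.2 = 1) ∨
  (w.1.val = v.1 ∧ w.2.val = v.2 + 1 ∧ p.2 v.1 (v.2 + 1) = 1) ∨
  (w.1.val = v.1 ∧ v.2.val = w.2 + 1 ∧ p.2 v.1 v.2 = 1)

lemma Link.symm {p : Cfg} {v w : V a b} (h : Link p v w) : Link p w v := by
  unfold Link at *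
  rcases h with ⟨h1, h2, h3⟩ | ⟨h1, h2, h3⟩ | ⟨h1, h2, h3⟩ | ⟨h1, h2, h3⟩
  · exact Or.inr (Or.inl ⟨h1, h2.symm, by rwa [h1, h2]⟩)
  · exact Or.inl ⟨h1, h2.symm, by rwa [← h1, h2]⟩
  · exact Or.inr (Or.inr (Or.inr ⟨h1.symm, h2, by rwa [h1, h2]⟩))
  · exact Or.inr (Or.inr (Or.inl ⟨h1.symm, h2, by rwa [← h2, h1]⟩))

lemma Link.unique {p : Cfg} (hp : PT a b p) {v w w' : V a b} (h : Link p v w) (h' : Link p v w') :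
    w = w' := by
  have := hp.cell v.1 v.2 v.1.2 v.2.2
  unfold Link at *
  refine Prod.ext (Fin.ext ?_) (Fin.ext ?_) <;> omega

lemma exists_link {p : Cfg} (hp : PT a b p) (v : V a b) : ∃ w, Link p v w := by
  have hc := hp.cell v.1 v.2 v.1.2 v.2.2
  have e1 := hp.left v.2 v.2.2
  have e2 := hp.right v.2 v.2.2
  have e3 := hp.bot v.1 v.1.2
  have e4 := hp.top v.1 v.1.2
  simp only [Pi.zero_apply] at e1 e2 e3 e4
  have hv1 := v.1.2
  have hv2 := v.2.2
  have : p.1 (v.1 + 1) v.2 = 1 ∨ p.1 v.1 v.2 = 1 ∨ p.2 v.1 (v.2 + 1) = 1 ∨ p.2 v.1 v.2 = 1 := by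
    omega
  unfold Link
  rcases this with h | h | h | h
  · have h1 : v.1.val + 1 < a := by
      by_contra hcon
      rw [show v.1.val + 1 = a by omega] at h
      omega
    exact ⟨(⟨v.1 + 1, h1⟩, v.2), Or.inl ⟨rfl, rfl, h⟩⟩
  · have h1 : v.1.val ≠ 0 := by
      intro hcon
      rw [hcon] at h
      omega
    exact ⟨(⟨v.1 - 1, by omega⟩, v.2), Or.inr (Or.inl ⟨by dsimp only; omega, rfl, h⟩)⟩
  · have h1 : v.2.val + 1 < b := by
      by_contra hcon
      rw [show v.2.val + 1 = b by omega] at h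
      omega
    exact ⟨(v.1, ⟨v.2 + 1, h1⟩), Or.inr (Or.inr (Or.inl ⟨rfl, rfl, h⟩))⟩
  · have h1 : v.2.val ≠ 0 := by
      intro hcon
      rw [hcon] at h
      omega
    exact ⟨(v.1, ⟨v.2 - 1, by omega⟩), Or.inr (Or.inr (Or.inr ⟨rfl, by dsimp only; omega, h⟩))⟩

/-- The other cell of the domino of `p` covering `v`. -/
noncomputable def nbr (p : Til a b 0 0 0 0) (v : V a b) : V a b := (exists_link p.2 v).choose

lemma nbr_link (p : Til a b 0 0 0 0) (v : V a b) : Link p.1 v (nbr p v) :=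
  (exists_link p.2 v).choose_spec

lemma nbr_eq {p : Til a b 0 0 0 0} {v w : V a b} (h : Link p.1 v w) : nbr p v = w :=
  (nbr_link p v).unique p.2 h

lemma nbr_nbr (p : Til a b 0 0 0 0) (v : V a b) : nbr p (nbr p v) = v :=
  nbr_eq (nbr_link p v).symm

/-- The black cells of the chessboard colouring. -/
abbrev Blk (v : V a b) : Prop := (v.1.val + v.2.val) % 2 = 0

lemma Link.blk {p : Cfg} {v w : V a b} (h : Link p v w) : Blk w ↔ ¬ Blk v := by
  unfold Link at h
  unfold Blk
  omega

lemma mix_mix (f g : V a b → V a b) (hf : ∀ v, f (f v) = v) (hg : ∀ v, g (g v) = v)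
    (hfb : ∀ v, Blk (f v) ↔ ¬ Blk v) (hgb : ∀ v, Blk (g v) ↔ ¬ Blk v) (v : V a b) :
    (fun v => if Blk v then g v else f v) ((fun v => if Blk v then f v else g v) v) = v := by
  by_cases h : Blk v
  · have h1 : ¬ Blk (f v) := fun h' => (hfb v).1 h' h
    dsimp only
    rw [if_pos h, if_neg h1, hf]
  · have h1 : Blk (g v) := (hgb v).2 h
    dsimp only
    rw [if_neg h, if_pos h1, hg]

/-- The permutation of the cells that follows `p` on the black cells and `q` on the white ones; these
are exactly the permutations moving every cell to an adjacent one. -/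
noncomputable def mixPerm (p q : Til a b 0 0 0 0) : Perm (V a b) where
  toFun v := if Blk v then nbr p v else nbr q v
  invFun v := if Blk v then nbr q v else nbr p v
  left_inv := mix_mix _ _ (nbr_nbr p) (nbr_nbr q) (fun v => (nbr_link p v).blk)
    (fun v => (nbr_link q v).blk)
  right_inv := mix_mix _ _ (nbr_nbr q) (nbr_nbr p) (fun v => (nbr_link q v).blk)
    (fun v => (nbr_link p v).blk)

lemma mixPerm_blk {p q : Til a b 0 0 0 0} {v : V a b} (h : Blk v) : mixPerm p q v = nbr p v :=
  if_pos h

lemma mixPerm_not_blk {p q : Til a b 0 0 0 0} {v : V a b} (h : ¬ Blk v) :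
    mixPerm p q v = nbr q v := if_neg h

lemma mixPerm_inv (p q : Til a b 0 0 0 0) : (mixPerm p q)⁻¹ = mixPerm q p := rfl

/-- Horizontally adjacent cells. -/
def HAdj (v w : V a b) : Prop := (w.1.val = v.1 + 1 ∨ v.1.val = w.1 + 1) ∧ w.2.val = v.2
/-- Vertically adjacent cells. -/
def VAdj (v w : V a b) : Prop := w.1.val = v.1 ∧ (w.2.val = v.2 + 1 ∨ v.2.val = w.2 + 1)

open Classical in
/-- The Kasteleyn matrix of the rectangle: weight `1` for horizontal and `I` for vertical edges. -/
noncomputable def K (a b : ℕ) : Matrix (V a b) (V a b) ℂ := fun v w =>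
  if HAdj v w then 1 else if VAdj v w then I else 0

lemma HAdj.symm {v w : V a b} (h : HAdj v w) : HAdj w v := by unfold HAdj at *; omega
lemma VAdj.symm {v w : V a b} (h : VAdj v w) : VAdj w v := by unfold VAdj at *; omega
lemma VAdj.not {v w : V a b} (h : VAdj v w) : ¬ HAdj v w := by unfold VAdj HAdj at *; omega

lemma K_h {v w : V a b} (h : HAdj v w) : K a b v w = 1 := if_pos h
lemma K_v {v w : V a b} (h : VAdj v w) : K a b v w = I := by
  simp [K, h, h.not]
lemma K_zero {v w : V a b} (h : ¬ HAdj v w) (h' : ¬ VAdj v w) : K a b v w = 0 := by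
  simp [K, h, h']

lemma K_symm (v w : V a b) : K a b v w = K a b w v := by
  by_cases h : HAdj v w
  · rw [K_h h, K_h h.symm]
  by_cases h' : VAdj v w
  · rw [K_v h', K_v h'.symm]
  rw [K_zero h h', K_zero (fun k => h k.symm) (fun k => h' k.symm)]

lemma Link.adj {p : Cfg} {v w : V a b} (h : Link p v w) : HAdj v w ∨ VAdj v w := by
  unfold Link at h
  unfold HAdj VAdj
  omega

/-- The term of the determinant of the Kasteleyn matrix belonging to the pair of tilings
`(p, q)`. -/
noncomputable def W (p q : Til a b 0 0 0 0) : ℂ :=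
  ((Perm.sign (mixPerm p q) : ℤ) : ℂ) * ∏ v, K a b v (mixPerm p q v)

lemma mixPerm_adj (p q : Til a b 0 0 0 0) (v : V a b) :
    HAdj v (mixPerm p q v) ∨ VAdj v (mixPerm p q v) := by
  by_cases h : Blk v
  · rw [mixPerm_blk h]; exact (nbr_link p v).adj
  · rw [mixPerm_not_blk h]; exact (nbr_link q v).adj

lemma W_norm (p q : Til a b 0 0 0 0) : ‖W p q‖ = 1 := by
  rw [W, norm_mul, norm_prod]
  have h1 : ∀ v, ‖K a b v (mixPerm p q v)‖ = 1 := by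
    intro v
    rcases mixPerm_adj p q v with h | h
    · rw [K_h h, norm_one]
    · rw [K_v h, norm_I]
  rw [Finset.prod_congr rfl (fun v _ => h1 v), Finset.prod_const_one, mul_one]
  rcases Int.units_eq_one_or (Perm.sign (mixPerm p q)) with h | h <;> simp [h]

lemma W_comm (p q : Til a b 0 0 0 0) : W p q = W q p := by
  unfold W
  rw [← mixPerm_inv p q, Perm.sign_inv]
  congr 1
  rw [← Equiv.prod_comp (mixPerm p q) (fun v => K a b v ((mixPerm p q)⁻¹ v))]
  refine Finset.prod_congr rfl fun v _ => ?_
  rw [show (mixPerm p q)⁻¹ (mixPerm p q v) = v from Equiv.symm_apply_apply _ _, K_symm]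

/-- If `p` and `p'` differ only in that the partners of two black cells are exchanged, the sign of the
permutation changes. If the two Kasteleyn weights involved are both multiplied by a square root `c`
of `-1`, then the product of the weights changes sign too, and the term of the determinant is
unchanged. -/
lemma W_of_swap {p p' q : Til a b 0 0 0 0} {b₁ b₂ : V a b} (hne : b₁ ≠ b₂) (h1 : Blk b₁)
    (h2 : Blk b₂) (e1 : nbr p' b₁ = nbr p b₂) (e2 : nbr p' b₂ = nbr p b₁)
    (e3 : ∀ v, Blk v → v ≠ b₁ → v ≠ b₂ → nbr p' v = nbr p v) {c : ℂ} (hc : c * c = -1)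
    (k1 : K a b b₁ (nbr p' b₁) = c * K a b b₁ (nbr p b₁))
    (k2 : K a b b₂ (nbr p' b₂) = c * K a b b₂ (nbr p b₂)) : W p' q = W p q := by
  have hs : mixPerm p' q = mixPerm p q * swap b₁ b₂ := by
    ext1 v
    rw [Perm.mul_apply]
    by_cases hv1 : v = b₁
    · subst hv1
      rw [swap_apply_left, mixPerm_blk h1, mixPerm_blk h2, e1]
    by_cases hv2 : v = b₂
    · subst hv2
      rw [swap_apply_right, mixPerm_blk h1, mixPerm_blk h2, e2]
    rw [swap_apply_of_ne_of_ne hv1 hv2]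
    by_cases hv : Blk v
    · rw [mixPerm_blk hv, mixPerm_blk hv, e3 v hv hv1 hv2]
    · rw [mixPerm_not_blk hv, mixPerm_not_blk hv]
  have hk : ∀ v, K a b v (mixPerm p' q v) =
      (if v = b₁ then c else 1) * (if v = b₂ then c else 1) * K a b v (mixPerm p q v) := by
    intro v
    by_cases hv1 : v = b₁
    · subst hv1
      rw [if_pos rfl, if_neg hne, mixPerm_blk h1, mixPerm_blk h1, k1, mul_one]
    by_cases hv2 : v = b₂
    · subst hv2
      rw [if_neg hv1, if_pos rfl, mixPerm_blk h2, mixPerm_blk h2, k2, one_mul]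
    rw [if_neg hv1, if_neg hv2, one_mul, one_mul]
    by_cases hv : Blk v
    · rw [mixPerm_blk hv, mixPerm_blk hv, e3 v hv hv1 hv2]
    · rw [mixPerm_not_blk hv, mixPerm_not_blk hv]
  unfold W
  rw [Finset.prod_congr rfl (fun v _ => hk v), Finset.prod_mul_distrib, Finset.prod_mul_distrib,
    Finset.prod_ite_eq' Finset.univ, Finset.prod_ite_eq' Finset.univ, if_pos (Finset.mem_univ _),
    if_pos (Finset.mem_univ _), hc, hs, Perm.sign_mul, Perm.sign_swap hne]
  push_cast
  ring

/-- A flip does not affect the cells outside the block. -/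
lemma Flip.link_outside {p p' : Til a b 0 0 0 0} {x y k : ℕ} (h : Flip a b p.1 p'.1 x y k) : ∀ v w : V a b, ((v.1.val ≠ x ∧ v.1.val ≠ x + 1) ∨ (v.2.val ≠ y ∧ v.2.val ≠ y + 1)) →
      Link p.1 v w → Link p'.1 v w := by
  obtain ⟨hp, hx, hy, hk, ⟨b1, b2, b3, b4⟩, he⟩ := h
  intro v w hv hl
  rw [he]
  unfold Link setB at *
  dsimp only
  rcases hl with hl | hl | hl | hl
  · rw [if_neg (by omega)]; exact Or.inl hl
  · rw [if_neg (c := v.1.val = x + 1 ∧ (v.2.val = y ∨ v.2.val = y + 1)) (by omega)]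
    exact Or.inr (Or.inl hl)
  · rw [if_neg (c := v.2.val + 1 = y + 1 ∧ (v.1.val = x ∨ v.1.val = x + 1)) (by omega)]
    exact Or.inr (Or.inr (Or.inl hl))
  · rw [if_neg (c := v.2.val = y + 1 ∧ (v.1.val = x ∨ v.1.val = x + 1)) (by omega)]
    exact Or.inr (Or.inr (Or.inr hl))

/-- The links inside the block before the flip. -/
lemma Flip.link_before {p p' : Til a b 0 0 0 0} {x y k : ℕ} (h : Flip a b p.1 p'.1 x y k) : ∀ v w : V a b, (k = 0 → v.1.val = w.1 ∧ (v.1.val = x ∨ v.1.val = x + 1) ∧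
      ((v.2.val = y ∧ w.2.val = y + 1) ∨ (v.2.val = y + 1 ∧ w.2.val = y))) →
      (k = 1 → v.2.val = w.2 ∧ (v.2.val = y ∨ v.2.val = y + 1) ∧
      ((v.1.val = x ∧ w.1.val = x + 1) ∨ (v.1.val = x + 1 ∧ w.1.val = x))) → Link p.1 v w := by
  obtain ⟨hp, hx, hy, hk, ⟨b1, b2, b3, b4⟩, he⟩ := h
  intro v w h0 h1
  unfold Link
  rcases (by omega : k = 0 ∨ k = 1) with rfl | rfl
  · obtain ⟨g1, g2 | g2, g3 | g3⟩ := h0 rfl <;> simp [g1.symm, g2, g3, b3, b4]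
  · obtain ⟨g1, g2 | g2, g3 | g3⟩ := h1 rfl <;> simp [g1.symm, g2, g3, b1, b2]

/-- The links inside the block after the flip. -/
lemma Flip.link_after {p p' : Til a b 0 0 0 0} {x y k : ℕ} (h : Flip a b p.1 p'.1 x y k) : ∀ v w : V a b, (k = 1 → v.1.val = w.1 ∧ (v.1.val = x ∨ v.1.val = x + 1) ∧
      ((v.2.val = y ∧ w.2.val = y + 1) ∨ (v.2.val = y + 1 ∧ w.2.val = y))) →
      (k = 0 → v.2.val = w.2 ∧ (v.2.val = y ∨ v.2.val = y + 1) ∧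
      ((v.1.val = x ∧ w.1.val = x + 1) ∨ (v.1.val = x + 1 ∧ w.1.val = x))) → Link p'.1 v w := by
  obtain ⟨hp, hx, hy, hk, ⟨b1, b2, b3, b4⟩, he⟩ := h
  intro v w h0 h1
  rw [he]
  unfold Link setB
  rcases (by omega : k = 0 ∨ k = 1) with rfl | rfl
  · obtain ⟨g1, g2 | g2, g3 | g3⟩ := h1 rfl <;> simp [g1.symm, g2, g3]
  · obtain ⟨g1, g2 | g2, g3 | g3⟩ := h0 rfl <;> simp [g1.symm, g2, g3]

/-- Coordinates of the two black cells of a `2 × 2` block: `i` tells which of the two lower cells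
is black. -/
lemma black_in_block {x y i j X Y : ℕ} (hi : i ≤ 1) (hij : i + j = 1)
    (hpar : (x + i + y) % 2 = 0) (hv : (X + Y) % 2 = 0)
    (h : ¬ ((X ≠ x ∧ X ≠ x + 1) ∨ (Y ≠ y ∧ Y ≠ y + 1))) :
    (X = x + i ∧ Y = y) ∨ (X = x + j ∧ Y = y + 1) := by
  obtain ⟨h1, h2⟩ := not_or.1 h
  have h1 : X = x ∨ X = x + 1 := by omega
  have h2 : Y = y ∨ Y = y + 1 := by omega
  rcases h1 with rfl | rfl <;> rcases h2 with rfl | rfl <;> omega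

set_option maxHeartbeats 1000000 in
/-- Kasteleyn's observation: a flip does not change the term of the determinant. -/
lemma W_flip {p p' q : Til a b 0 0 0 0} {x y k : ℕ} (h : Flip a b p.1 p'.1 x y k) :
    W p' q = W p q := by
  have hout := h.link_outside
  have hpl := h.link_before
  have hpl' := h.link_after
  have hx := h.hx
  have hy := h.hy
  have hk := h.hk
  have main : ∀ i j : ℕ, i ≤ 1 → (i + j = 1) → (x + i + y) % 2 = 0 → W p' q = W p q := by
    intro i j hi hij hpar
    have ex : ∀ m n : ℕ, m < a → n < b → ∃ v : V a b, v.1.val = m ∧ v.2.val = n :=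
      fun m n hm hn => ⟨(⟨m, hm⟩, ⟨n, hn⟩), rfl, rfl⟩
    -- `B₁`, `B₂` are the black cells of the block, `W₁`, `W₂` the white ones.
    obtain ⟨B₁, b11, b12⟩ := ex (x + i) y (by omega) (by omega)
    obtain ⟨B₂, b21, b22⟩ := ex (x + j) (y + 1) (by omega) (by omega)
    obtain ⟨W₁, w11, w12⟩ := ex (x + j) y (by omega) (by omega)
    obtain ⟨W₂, w21, w22⟩ := ex (x + i) (y + 1) (by omega) (by omega)
    have hne : B₁ ≠ B₂ := by
      rintro rfl
      omega
    have hb1 : Blk B₁ := by unfold Blk; omega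
    have hb2 : Blk B₂ := by unfold Blk; omega
    have e3 : ∀ v, Blk v → v ≠ B₁ → v ≠ B₂ → nbr p' v = nbr p v := by
      intro v hv hv1 hv2
      refine nbr_eq (hout _ _ ?_ (nbr_link p v))
      by_contra hcon
      rcases black_in_block hi hij hpar hv hcon with h | h
      · exact hv1 (Prod.ext (Fin.ext (h.1.trans b11.symm)) (Fin.ext (h.2.trans b12.symm)))
      · exact hv2 (Prod.ext (Fin.ext (h.1.trans b21.symm)) (Fin.ext (h.2.trans b22.symm)))
    have hH1 : HAdj B₁ W₁ := by unfold HAdj; omega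
    have hH2 : HAdj B₂ W₂ := by unfold HAdj; omega
    have hV1 : VAdj B₁ W₂ := by unfold VAdj; omega
    have hV2 : VAdj B₂ W₁ := by unfold VAdj; omega
    rcases (by omega : k = 0 ∨ k = 1) with rfl | rfl
    · have l1 : nbr p B₁ = W₂ := nbr_eq (hpl _ _ (fun _ => by omega) (fun _ => by omega))
      have l2 : nbr p B₂ = W₁ := nbr_eq (hpl _ _ (fun _ => by omega) (fun _ => by omega))
      have l3 : nbr p' B₁ = W₁ := nbr_eq (hpl' _ _ (fun _ => by omega) (fun _ => by omega))
      have l4 : nbr p' B₂ = W₂ := nbr_eq (hpl' _ _ (fun _ => by omega) (fun _ => by omega))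
      refine W_of_swap hne hb1 hb2 (l3.trans l2.symm) (l4.trans l1.symm) e3 (c := -I) (by simp)
        ?_ ?_
      · rw [l1, l3, K_h hH1, K_v hV1]; simp
      · rw [l2, l4, K_h hH2, K_v hV2]; simp
    · have l1 : nbr p' B₁ = W₂ := nbr_eq (hpl' _ _ (fun _ => by omega) (fun _ => by omega))
      have l2 : nbr p' B₂ = W₁ := nbr_eq (hpl' _ _ (fun _ => by omega) (fun _ => by omega))
      have l3 : nbr p B₁ = W₁ := nbr_eq (hpl _ _ (fun _ => by omega) (fun _ => by omega))
      have l4 : nbr p B₂ = W₂ := nbr_eq (hpl _ _ (fun _ => by omega) (fun _ => by omega))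
      refine W_of_swap hne hb1 hb2 (l1.trans l4.symm) (l2.trans l3.symm) e3 (c := I) (by simp)
        ?_ ?_
      · rw [l1, l3, K_h hH1, K_v hV1]; simp
      · rw [l2, l4, K_h hH2, K_v hV2]; simp
  rcases Nat.mod_two_eq_zero_or_one (x + y) with h | h
  · exact main 0 1 (by omega) rfl (by omega)
  · exact main 1 0 (by omega) rfl (by omega)

/-- The brick tiling as an element of `Til`. -/
def brickTil (w b : ℕ) : Til (2 * w) b 0 0 0 0 := ⟨brick (2 * w) b, brick_pt w b⟩

lemma W_reach {p p' : Cfg} (h : Reach a b p p') (hp : PT a b p) :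
    ∃ hp' : PT a b p', ∀ q, W ⟨p', hp'⟩ q = W ⟨p, hp⟩ q := by
  induction h with
  | refl => exact ⟨hp, fun _ => rfl⟩
  | tail _ hf ih =>
    obtain ⟨hp1, ih⟩ := ih
    obtain ⟨x, y, k, hf⟩ := hf
    exact ⟨hf.pt', fun q => (W_flip hf).trans (ih q)⟩

/-- All terms of the determinant are equal, since flips connect all tilings. -/
lemma W_const {w b : ℕ} (p q : Til (2 * w) b 0 0 0 0) :
    W p q = W (brickTil w b) (brickTil w b) := by
  have h : ∀ p q : Til (2 * w) b 0 0 0 0, W p q = W (brickTil w b) q := by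
    intro p q
    obtain ⟨_, h⟩ := W_reach (reach_brick p.2) p.2
    exact (h q).symm
  rw [h p q, W_comm, h]

end Dimer

/-! ### Kasteleyn's determinant formula for rectangles -/

namespace Dimer
open Equiv Complex

variable {a b : ℕ}

lemma nbr_inj {p q : Til a b 0 0 0 0} (h : ∀ v, nbr p v = nbr q v) : p = q := by
  have hl : ∀ v w : V a b, Link p.1 v w ↔ Link q.1 v w := by
    intro v w
    constructor
    · intro k; rw [← nbr_eq k, h]; exact nbr_link q v
    · intro k; rw [← nbr_eq k, ← h]; exact nbr_link p v
  refine Subtype.ext (p.2.ext' q.2 ?_ ?_)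
  · intro x y hx hy
    rcases Nat.lt_or_ge x a with hxa | hxa
    · rcases x with _ | x
      · rw [p.2.left y hy, q.2.left y hy]
      have := p.2.cell _ y hxa hy
      have := q.2.cell _ y hxa hy
      have := hl (⟨x, by omega⟩, ⟨y, hy⟩) (⟨x + 1, by omega⟩, ⟨y, hy⟩)
      simp [Link] at this
      omega
    · obtain rfl : x = a := by omega
      rw [p.2.right y hy, q.2.right y hy]
  · intro x y hx hy
    rcases Nat.lt_or_ge y b with hyb | hyb
    · rcases y with _ | y
      · rw [p.2.bot x hx, q.2.bot x hx]
      have := p.2.cell x _ hx hyb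
      have := q.2.cell x _ hx hyb
      have := hl (⟨x, hx⟩, ⟨y, by omega⟩) (⟨x, hx⟩, ⟨y + 1, by omega⟩)
      simp [Link] at this
      omega
    · obtain rfl : y = b := by omega
      rw [p.2.top x hx, q.2.top x hx]

lemma nbr_inj_blk {p q : Til a b 0 0 0 0} (h : ∀ v, Blk v → nbr p v = nbr q v) : p = q := by
  refine nbr_inj fun v => ?_
  by_cases hv : Blk v
  · exact h v hv
  · have := h (nbr p v) ((nbr_link p v).blk.2 hv)
    rw [nbr_nbr] at this
    conv_rhs => rw [this]
    rw [nbr_nbr]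

lemma nbr_inj_white {p q : Til a b 0 0 0 0} (h : ∀ v, ¬ Blk v → nbr p v = nbr q v) : p = q := by
  refine nbr_inj_blk fun v hv => ?_
  have := h (nbr p v) (fun k => (nbr_link p v).blk.1 k hv)
  rw [nbr_nbr] at this
  conv_rhs => rw [this]
  rw [nbr_nbr]

/-- A pair of tilings is determined by its permutation. -/
lemma mixPerm_inj {p q p' q' : Til a b 0 0 0 0} (h : mixPerm p q = mixPerm p' q') :
    p = p' ∧ q = q' := by
  constructor
  · refine nbr_inj_blk fun v hv => ?_
    rw [← mixPerm_blk (q := q) hv, h, mixPerm_blk hv]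
  · refine nbr_inj_white fun v hv => ?_
    rw [← mixPerm_not_blk (p := p) hv, h, mixPerm_not_blk hv]

open Classical in
/-- The domino configuration of an involution `τ` moving every cell to an adjacent one. -/
noncomputable def conf (τ : V a b → V a b) : Cfg :=
  (fun x y => if ∃ v : V a b, v.1.val + 1 = x ∧ v.2.val = y ∧ (τ v).1.val = x ∧ (τ v).2.val = y
      then 1 else 0,
   fun x y => if ∃ v : V a b, v.1.val = x ∧ v.2.val + 1 = y ∧ (τ v).1.val = x ∧ (τ v).2.val = y
      then 1 else 0)

lemma vext {v w : V a b} (h1 : v.1.val = w.1) (h2 : v.2.val = w.2) : v = w :=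
  Prod.ext (Fin.ext h1) (Fin.ext h2)

lemma conf_h1 {τ : V a b → V a b} (v : V a b) : (conf τ).1 (v.1 + 1) v.2 =
    if (τ v).1.val = v.1 + 1 ∧ (τ v).2.val = v.2 then 1 else 0 := by
  unfold conf
  dsimp only
  congr 1
  refine propext ⟨?_, fun h => ⟨v, rfl, rfl, h⟩⟩
  rintro ⟨w, h1, h2, h3⟩
  rwa [vext (v := w) (w := v) (by omega) h2] at h3

lemma conf_v1 {τ : V a b → V a b} (v : V a b) : (conf τ).2 v.1 (v.2 + 1) =
    if (τ v).1.val = v.1 ∧ (τ v).2.val = v.2 + 1 then 1 else 0 := by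
  unfold conf
  dsimp only
  congr 1
  refine propext ⟨?_, fun h => ⟨v, rfl, rfl, h⟩⟩
  rintro ⟨w, h1, h2, h3⟩
  rwa [vext (v := w) (w := v) h1 (by omega)] at h3

lemma conf_h0 {τ : V a b → V a b} (hτ : ∀ v, τ (τ v) = v) (v : V a b) : (conf τ).1 v.1 v.2 =
    if (τ v).1.val + 1 = v.1 ∧ (τ v).2.val = v.2 then 1 else 0 := by
  unfold conf
  dsimp only
  congr 1
  refine propext ⟨?_, fun h => ⟨τ v, h.1, h.2, by rw [hτ], by rw [hτ]⟩⟩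
  rintro ⟨w, h1, h2, h3⟩
  rw [← vext h3.1 h3.2, hτ]
  omega

lemma conf_v0 {τ : V a b → V a b} (hτ : ∀ v, τ (τ v) = v) (v : V a b) : (conf τ).2 v.1 v.2 =
    if (τ v).1.val = v.1 ∧ (τ v).2.val + 1 = v.2 then 1 else 0 := by
  unfold conf
  dsimp only
  congr 1
  refine propext ⟨?_, fun h => ⟨τ v, h.1, h.2, by rw [hτ], by rw [hτ]⟩⟩
  rintro ⟨w, h1, h2, h3⟩
  rw [← vext h3.1 h3.2, hτ]
  omega

lemma conf_pt {τ : V a b → V a b} (hτ : ∀ v, τ (τ v) = v)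
    (hadj : ∀ v, HAdj v (τ v) ∨ VAdj v (τ v)) : PT a b (conf τ) := by
  constructor
  · intro x y hx hy
    have e1 := conf_h1 (τ := τ) (⟨x, hx⟩, ⟨y, hy⟩)
    have e2 := conf_h0 hτ (⟨x, hx⟩, ⟨y, hy⟩)
    have e3 := conf_v1 (τ := τ) (⟨x, hx⟩, ⟨y, hy⟩)
    have e4 := conf_v0 hτ (⟨x, hx⟩, ⟨y, hy⟩)
    have h := hadj (⟨x, hx⟩, ⟨y, hy⟩)
    dsimp only at e1 e2 e3 e4
    rw [e1, e2, e3, e4]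
    unfold HAdj VAdj at h
    dsimp only at h
    generalize (τ (⟨x, hx⟩, ⟨y, hy⟩)).1.val = X at *
    generalize (τ (⟨x, hx⟩, ⟨y, hy⟩)).2.val = Y at *
    rcases h with ⟨rfl | rfl, rfl⟩ | ⟨rfl, rfl | rfl⟩ <;> simp <;> omega
  · intro y hy
    refine if_neg ?_
    rintro ⟨v, h, -⟩
    omega
  · intro y hy
    refine if_neg ?_
    rintro ⟨v, -, -, h, -⟩
    have := (τ v).1.2
    omega
  · intro y hy
    refine if_neg ?_
    rintro ⟨v, -, h, -⟩
    omega
  · intro y hy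
    refine if_neg ?_
    rintro ⟨v, -, -, -, h⟩
    have := (τ v).2.2
    omega
  · intro x y hxy
    refine if_neg ?_
    rintro ⟨v, -, -, h, h'⟩
    have := (τ v).2.2
    have := (τ v).1.2
    omega
  · intro x y hxy
    refine if_neg ?_
    rintro ⟨v, -, -, h, h'⟩
    have := (τ v).2.2
    have := (τ v).1.2
    omega

lemma conf_link {τ : V a b → V a b} (hτ : ∀ v, τ (τ v) = v)
    (hadj : ∀ v, HAdj v (τ v) ∨ VAdj v (τ v)) (v : V a b) : Link (conf τ) v (τ v) := by
  unfold Link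
  rw [conf_h1, conf_v1, conf_h0 hτ, conf_v0 hτ]
  have h := hadj v
  unfold HAdj VAdj at h
  rcases h with ⟨h1 | h1, h2⟩ | ⟨h1, h2 | h2⟩ <;> simp [h1, h2]

lemma exists_til {τ : V a b → V a b} (hτ : ∀ v, τ (τ v) = v)
    (hadj : ∀ v, HAdj v (τ v) ∨ VAdj v (τ v)) : ∃ p : Til a b 0 0 0 0, ∀ v, nbr p v = τ v :=
  ⟨⟨conf τ, conf_pt hτ hadj⟩, fun v => nbr_eq (conf_link hτ hadj v)⟩

lemma adj_blk {v w : V a b} (h : HAdj v w ∨ VAdj v w) : Blk w ↔ ¬ Blk v := by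
  unfold HAdj VAdj at h
  unfold Blk
  omega

/-- Every permutation moving cells to adjacent cells comes from a pair of tilings. -/
lemma exists_mix (σ : Perm (V a b)) (h : ∀ v, HAdj v (σ v) ∨ VAdj v (σ v)) :
    ∃ p q : Til a b 0 0 0 0, mixPerm p q = σ := by
  have h' : ∀ v, HAdj v (σ⁻¹ v) ∨ VAdj v (σ⁻¹ v) := by
    intro v
    have := h (σ⁻¹ v)
    rw [show σ (σ⁻¹ v) = v from Equiv.apply_symm_apply _ _] at this
    exact this.imp HAdj.symm VAdj.symm
  have main : ∀ σ : Perm (V a b), (∀ v, HAdj v (σ v) ∨ VAdj v (σ v)) →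
      (∀ v, HAdj v (σ⁻¹ v) ∨ VAdj v (σ⁻¹ v)) →
      ∃ p : Til a b 0 0 0 0, ∀ v, nbr p v = if Blk v then σ v else σ⁻¹ v := by
    intro σ h h'
    refine exists_til ?_ ?_
    · intro v
      by_cases hv : Blk v
      · have h1 : ¬ Blk (σ v) := fun k => (adj_blk (h v)).1 k hv
        rw [if_pos hv, if_neg h1]
        exact Equiv.symm_apply_apply _ _
      · have h1 : Blk (σ⁻¹ v) := (adj_blk (h' v)).2 hv
        rw [if_neg hv, if_pos h1]
        exact Equiv.apply_symm_apply _ _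
    · intro v
      split_ifs
      exacts [h v, h' v]
  obtain ⟨p, hp⟩ := main σ h h'
  obtain ⟨q, hq⟩ := main σ⁻¹ h' (by simpa using h)
  refine ⟨p, q, ?_⟩
  ext1 v
  by_cases hv : Blk v
  · rw [mixPerm_blk hv, hp, if_pos hv]
  · rw [mixPerm_not_blk hv, hq, if_neg hv, inv_inv]

open Classical in
/-- The nonzero terms of the determinant are indexed by the pairs of tilings. -/
lemma det_eq [Fintype (Til a b 0 0 0 0)] :
    (K a b).det = ∑ x : Til a b 0 0 0 0 × Til a b 0 0 0 0, W x.1 x.2 := by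
  rw [← Matrix.det_transpose, Matrix.det_apply']
  symm
  refine Finset.sum_of_injOn (fun x => mixPerm x.1 x.2) ?_ ?_ ?_ ?_
  · rintro ⟨p, q⟩ _ ⟨p', q'⟩ _ h
    obtain ⟨h1, h2⟩ := mixPerm_inj h
    exact Prod.ext h1 h2
  · intro _ _; simp
  · intro σ _ hσ
    have : ∃ v, ¬ (HAdj v (σ v) ∨ VAdj v (σ v)) := by
      by_contra! hcon
      obtain ⟨p, q, hpq⟩ := exists_mix σ hcon
      exact hσ ⟨(p, q), by simp, hpq⟩
    obtain ⟨v, hv⟩ := this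
    obtain ⟨hv1, hv2⟩ := not_or.1 hv
    refine mul_eq_zero_of_right _ (Finset.prod_eq_zero (Finset.mem_univ v) ?_)
    exact K_zero hv1 hv2
  · rintro ⟨p, q⟩ _
    rfl

/-- Kasteleyn's theorem for rectangles: the determinant is a sum of `Z²` equal terms of modulus
`1`. -/
theorem norm_det (w b : ℕ) : ‖(K (2 * w) b).det‖ = (Z (2 * w) b 0 0 0 0 : ℝ) ^ 2 := by
  classical
  have := Fintype.ofFinite (Til (2 * w) b 0 0 0 0)
  rw [det_eq, Finset.sum_congr rfl (fun x _ => W_const x.1 x.2), Finset.sum_const, nsmul_eq_mul,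
    norm_mul, W_norm, mul_one, Finset.card_univ, Fintype.card_prod, Z, Nat.card_eq_fintype_card]
  push_cast
  rw [← pow_two]
  simp

end Dimer

/-! ### Diagonalization of the Kasteleyn matrix -/

namespace Dimer
open Complex Matrix Kronecker

/-- The angles `(j + 1)π / (S + 1)` of the spectrum of the path on `S` vertices. -/
noncomputable def ang (S j : ℕ) : ℝ := (j + 1) * Real.pi / (S + 1)

/-- The adjacency matrix of the path on `S` vertices. -/
noncomputable def pathM (S : ℕ) : Matrix (Fin S) (Fin S) ℝ := fun x y =>
  (if y.val = x.val + 1 then 1 else 0) + (if y.val + 1 = x.val then 1 else 0)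

/-- The matrix whose columns are the eigenvectors of `pathM S`. -/
noncomputable def sinM (S : ℕ) : Matrix (Fin S) (Fin S) ℝ := fun x j =>
  Real.sin ((x.val + 1 : ℕ) * ang S j)

/-- Multiplication by `pathM` is the two-term sum of a function vanishing at both ends. -/
lemma pathM_sum {S : ℕ} (f : ℕ → ℝ) (h0 : f 0 = 0) (h1 : f (S + 1) = 0) (x : Fin S) :
    ∑ y : Fin S, pathM S x y * f (y.val + 1) = f x + f (x + 2) := by
  have hx := x.2
  simp only [pathM, add_mul, Finset.sum_add_distrib, ite_mul, one_mul, zero_mul]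
  rw [Fin.sum_univ_eq_sum_range (fun y => if y = x.val + 1 then f (y + 1) else 0) S,
    Fin.sum_univ_eq_sum_range (fun y => if y + 1 = x.val then f (y + 1) else 0) S,
    Finset.sum_ite_eq' (Finset.range S), add_comm]
  congr 1
  · rcases Nat.eq_zero_or_pos x.val with h | h
    · rw [h, h0]
      refine Finset.sum_eq_zero fun y _ => if_neg (by omega)
    · rw [Finset.sum_eq_single (x.val - 1)]
      · rw [if_pos (by omega), Nat.sub_add_cancel h]
      · intro y _ hy
        exact if_neg (by omega)
      · intro h'
        exact absurd (Finset.mem_range.2 (by omega)) h'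
  · split_ifs with h
    · rfl
    · rw [Finset.mem_range] at h
      rw [show x.val + 2 = S + 1 by omega, h1]

lemma ang_mul (S j : ℕ) : ((S + 1 : ℕ) : ℝ) * ang S j = (j + 1 : ℕ) * Real.pi := by
  unfold ang
  have : (S : ℝ) + 1 ≠ 0 := by positivity
  push_cast
  field_simp

lemma ang_pos (S j : ℕ) : 0 < ang S j := by
  unfold ang; have := Real.pi_pos; positivity

lemma ang_lt {S j : ℕ} (h : j < S) : ang S j < Real.pi := by
  unfold ang
  have : (j : ℝ) + 1 < S + 1 := by exact_mod_cast Nat.succ_lt_succ h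
  rw [div_lt_iff₀ (by positivity)]
  nlinarith [Real.pi_pos]

lemma ang_inj {S j k : ℕ} (h : ang S j = ang S k) : j = k := by
  unfold ang at h
  have h1 : (S : ℝ) + 1 ≠ 0 := by positivity
  have := Real.pi_ne_zero
  field_simp at h
  exact_mod_cast add_right_cancel h

lemma path_mul_sin (S : ℕ) :
    pathM S * sinM S = sinM S * diagonal (fun j : Fin S => 2 * Real.cos (ang S j)) := by
  ext x j
  rw [mul_diagonal, mul_apply]
  refine (pathM_sum (fun n => Real.sin (n * ang S j)) (by simp) ?_ x).trans ?_
  · rw [ang_mul, Real.sin_nat_mul_pi]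
  · unfold sinM
    push_cast
    rw [show (x.val : ℝ) * ang S j = (x.val + 1) * ang S j - ang S j by ring,
      show ((x.val : ℝ) + 2) * ang S j = (x.val + 1) * ang S j + ang S j by ring,
      Real.sin_sub, Real.sin_add]
    ring

lemma sinM_det (S : ℕ) : (sinM S).det ≠ 0 := by
  rw [← isUnit_iff_ne_zero, ← Matrix.isUnit_iff_isUnit_det, ← Matrix.linearIndependent_cols_iff_isUnit]
  refine Module.End.eigenvectors_linearIndependent' (Matrix.toLin' (pathM S))
    (fun j : Fin S => 2 * Real.cos (ang S j)) ?_ (sinM S).col ?_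
  · intro j k h
    have := Real.injOn_cos ⟨(ang_pos S j).le, (ang_lt j.2).le⟩ ⟨(ang_pos S k).le, (ang_lt k.2).le⟩
      (mul_left_cancel₀ two_ne_zero h)
    exact Fin.ext (ang_inj this)
  · intro j
    rw [Module.End.hasEigenvector_iff, Module.End.mem_eigenspace_iff]
    constructor
    · ext x
      have := congrFun (congrFun (path_mul_sin S) x) j
      rw [mul_diagonal, mul_apply] at this
      rw [Matrix.toLin'_apply, Pi.smul_apply, smul_eq_mul, mul_comm]
      exact this
    · intro h
      have hS : 0 < S := by have := j.2; omega
      have := congrFun h ⟨0, hS⟩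
      simp only [sinM, Matrix.col_apply, zero_add, Nat.cast_one, one_mul, Pi.zero_apply] at this
      exact (Real.sin_pos_of_pos_of_lt_pi (ang_pos S j) (ang_lt j.2)).ne' this

lemma K_eq (S : ℕ) : K S S = (pathM S).map ofReal ⊗ₖ (1 : Matrix (Fin S) (Fin S) ℂ) +
    I • ((1 : Matrix (Fin S) (Fin S) ℂ) ⊗ₖ (pathM S).map ofReal) := by
  ext ⟨x, y⟩ ⟨x', y'⟩
  simp only [Matrix.add_apply, Matrix.smul_apply, kroneckerMap_apply, map_apply, pathM, one_apply, smul_eq_mul]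
  by_cases h1 : x = x' <;> by_cases h2 : y = y'
  · subst h1 h2
    rw [K_zero (by unfold HAdj; simp) (by unfold VAdj; simp)]
    simp
  · subst h1
    rw [if_neg h2, if_pos rfl]
    by_cases h : VAdj (x, y) (x, y')
    · rw [K_v h]
      unfold VAdj at h
      rcases h.2 with h3 | h3 <;> dsimp only at h3 <;> simp [h3] <;> omega
    · rw [K_zero (by unfold HAdj; simp) h]
      unfold VAdj at h
      simp at h
      simpa [h.1] using fun k => h.2 k.symm
  · subst h2
    rw [if_neg h1, if_pos rfl]
    by_cases h : HAdj (x, y) (x', y)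
    · rw [K_h h]
      unfold HAdj at h
      rcases h.1 with h3 | h3 <;> dsimp only at h3 <;> simp [h3] <;> omega
    · rw [K_zero h (by unfold VAdj; simp)]
      unfold HAdj at h
      have h3 : ¬ x'.val = x.val + 1 ∧ ¬ x'.val + 1 = x.val := by dsimp only at h; omega
      simp [h3.1, h3.2]
  · rw [K_zero (by unfold HAdj; simp; omega) (by unfold VAdj; simp; omega)]
    simp [h1, h2]

/-- The Kasteleyn matrix is diagonalized by products of sines, with eigenvalues
`2 cos θ_j + 2i cos θ_k`. -/
theorem det_K_eq (S : ℕ) : (K S S).det =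
    ∏ v : Fin S × Fin S, (((2 * Real.cos (ang S v.1) : ℝ) : ℂ) + I * (2 * Real.cos (ang S v.2) : ℝ)) := by
  set A := (pathM S).map ofReal with hA
  set Q := (sinM S).map ofReal with hQ
  set D : Matrix (Fin S) (Fin S) ℂ := diagonal (fun j => ((2 * Real.cos (ang S j) : ℝ) : ℂ)) with hD
  have h1 : A * Q = Q * D := by
    have := congrArg (fun M : Matrix (Fin S) (Fin S) ℝ => M.map ofRealHom) (path_mul_sin S)
    rw [Matrix.map_mul, Matrix.map_mul, diagonal_map (map_zero _)] at this
    exact this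
  have hdQ : Q.det ≠ 0 := by
    have := RingHom.map_det ofRealHom (sinM S)
    intro h
    rw [show ofRealHom.mapMatrix (sinM S) = Q from rfl, h] at this
    exact sinM_det S (by simpa using this)
  have h2 : K S S * (Q ⊗ₖ Q) = (Q ⊗ₖ Q) * (D ⊗ₖ 1 + I • (1 ⊗ₖ D)) := by
    rw [K_eq, add_mul, mul_add, Matrix.smul_mul, Matrix.mul_smul, ← mul_kronecker_mul, ← mul_kronecker_mul,
      ← mul_kronecker_mul, ← mul_kronecker_mul, ← hA, h1, Matrix.one_mul, Matrix.mul_one]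
  have h3 : D ⊗ₖ (1 : Matrix (Fin S) (Fin S) ℂ) + I • ((1 : Matrix (Fin S) (Fin S) ℂ) ⊗ₖ D) =
      diagonal (fun v : Fin S × Fin S => ((2 * Real.cos (ang S v.1) : ℝ) : ℂ) +
        I * (2 * Real.cos (ang S v.2) : ℝ)) := by
    rw [hD, ← diagonal_one, diagonal_kronecker_diagonal, diagonal_kronecker_diagonal,
      ← diagonal_smul, diagonal_add]
    congr 1
    ext v
    simp
  have h4 := congrArg Matrix.det h2
  rw [det_mul, det_mul, mul_comm, h3, det_diagonal] at h4
  refine mul_left_cancel₀ ?_ h4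
  rw [det_kronecker]
  exact mul_ne_zero (pow_ne_zero _ hdQ) (pow_ne_zero _ hdQ)

end Dimer

/-! ### The number of tilings of a square -/

namespace Dimer
open Complex Polynomial

/-- Factorization of the Chebyshev polynomial of the second kind over its roots. -/
lemma U_eval_prod (S : ℕ) (z : ℂ) : (Chebyshev.U ℂ S).eval z =
    ∏ j ∈ Finset.range S, (2 * z - (2 * Real.cos (ang S j) : ℝ)) := by
  have hr := Chebyshev.roots_U_real S
  have hnd := Chebyshev.roots_U_real_nodup S
  have hroots : (Chebyshev.U ℝ S).roots =
      (Multiset.range S).map (fun j => Real.cos (ang S j)) := by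
    rw [hr, Finset.image_val, Finset.range_val]
    exact Multiset.dedup_eq_self.2 hnd
  have hcard : (Chebyshev.U ℝ S).roots.card = (Chebyshev.U ℝ S).natDegree := by
    rw [hroots, Multiset.card_map, Multiset.card_range, Chebyshev.natDegree_U_natCast]
  have h1 := C_leadingCoeff_mul_prod_multiset_X_sub_C hcard
  rw [hroots, Chebyshev.leadingCoeff_U_natCast, Multiset.map_map] at h1
  have h2 := congrArg (fun p => (p.map ofRealHom).eval z) h1
  simp only [Chebyshev.map_U] at h2
  rw [← h2]
  have h3 : (Multiset.map ((fun a => (X : ℝ[X]) - C a) ∘ fun j => Real.cos (ang S j))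
      (Multiset.range S)).prod = ∏ j ∈ Finset.range S, (X - C (Real.cos (ang S j))) := rfl
  rw [h3, Polynomial.map_mul, Polynomial.map_prod, eval_mul, eval_prod]
  simp only [Polynomial.map_sub, map_X, map_C, eval_sub, eval_X, eval_C, ofRealHom_eq_coe]
  rw [Finset.prod_congr rfl (fun j _ => show 2 * z - ((2 * Real.cos (ang S j) : ℝ) : ℂ) =
    2 * (z - (Real.cos (ang S j) : ℂ)) by push_cast; ring), Finset.prod_mul_distrib,
    Finset.prod_const, Finset.card_range]
  simp

/-- The value of `U_{2w}` on the imaginary axis, from `U_n(cosh z) = sinh((n + 1)z) / sinh z` at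
`z = θ + iπ/2`. -/
lemma norm_U (w : ℕ) (θ : ℝ) : ‖(Chebyshev.U ℂ (2 * w : ℕ)).eval (I * Real.sinh θ)‖ =
    Real.cosh ((2 * w + 1 : ℕ) * θ) / Real.cosh θ := by
  have h := Chebyshev.U_complex_cosh (θ + Real.pi / 2 * I) (2 * w : ℕ)
  have e1 : cosh ((θ : ℂ) + Real.pi / 2 * I) = I * Real.sinh θ := by
    rw [cosh_add, cosh_mul_I, sinh_mul_I]
    simp [mul_comm]
  have e2 : sinh ((θ : ℂ) + Real.pi / 2 * I) = Real.cosh θ * I := by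
    rw [sinh_add, cosh_mul_I, sinh_mul_I]
    simp
  have e3 : ((((2 * w : ℕ) : ℤ) : ℂ) + 1) * ((θ : ℂ) + Real.pi / 2 * I) =
      (((2 * w + 1 : ℕ) * θ : ℝ) : ℂ) + ((w * Real.pi + Real.pi / 2 : ℝ) : ℂ) * I := by
    push_cast
    ring
  rw [e1, e2, e3, sinh_add, cosh_mul_I, sinh_mul_I, ← ofReal_cos, ← ofReal_sin,
    Real.cos_add_pi_div_two, Real.sin_add_pi_div_two, Real.sin_nat_mul_pi, Real.cos_nat_mul_pi] at h
  have h' := congrArg norm h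
  rw [eq_div_iff (Real.cosh_pos θ).ne']
  simpa only [norm_mul, norm_I, mul_one, ofReal_zero, neg_zero, mul_zero, zero_add,
    norm_real, Real.norm_eq_abs, ← ofReal_cosh, abs_pow, abs_neg, abs_one, one_pow,
    abs_of_pos (Real.cosh_pos _)] using h'

lemma cosh_bounds (n : ℕ) (θ : ℝ) : Real.exp (n * |θ|) / 2 ≤ Real.cosh ((n + 1 : ℕ) * θ) / Real.cosh θ ∧
    Real.cosh ((n + 1 : ℕ) * θ) / Real.cosh θ ≤ Real.exp (n * |θ|) := by
  have hn : (0 : ℝ) ≤ n := Nat.cast_nonneg n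
  rw [← Real.cosh_abs θ, ← Real.cosh_abs ((n + 1 : ℕ) * θ), abs_mul, Nat.abs_cast]
  have ht := abs_nonneg θ
  generalize |θ| = t at *
  rw [le_div_iff₀ (Real.cosh_pos t), div_le_iff₀ (Real.cosh_pos t), Real.cosh_eq, Real.cosh_eq]
  push_cast
  have e1 : Real.exp (n * t) * Real.exp t = Real.exp ((n + 1) * t) := by
    rw [← Real.exp_add]; ring_nf
  have e2 : Real.exp (n * t) * Real.exp (-t) = Real.exp ((n - 1) * t) := by
    rw [← Real.exp_add]; ring_nf
  have i1 : Real.exp ((n - 1) * t) ≤ Real.exp ((n + 1) * t) := Real.exp_le_exp.2 (by nlinarith)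
  have i2 : Real.exp (-((n + 1) * t)) ≤ Real.exp ((n - 1) * t) := Real.exp_le_exp.2 (by nlinarith)
  have i3 := Real.exp_pos (-((n + 1) * t))
  constructor <;> nlinarith

/-- The number `θ_k` with `sinh θ_k = cos (ang S k)`. -/
noncomputable def th (S k : ℕ) : ℝ := Real.arsinh (Real.cos (ang S k))

/-- The product over `j` of the eigenvalues is a value of `U_{2w}`, which leaves a single product. -/
lemma norm_det_K (w : ℕ) : ‖(K (2 * w) (2 * w)).det‖ = ∏ k ∈ Finset.range (2 * w),
    (Real.cosh ((2 * w + 1 : ℕ) * th (2 * w) k) / Real.cosh (th (2 * w) k)) := by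
  rw [det_K_eq, Fintype.prod_prod_type_right, norm_prod]
  rw [Fin.prod_univ_eq_prod_range (fun k => ‖∏ x : Fin (2 * w), (((2 * Real.cos (ang (2 * w) x) : ℝ) : ℂ)
    + I * (2 * Real.cos (ang (2 * w) k) : ℝ))‖)]
  refine Finset.prod_congr rfl fun k _ => ?_
  have h := norm_U w (-th (2 * w) k)
  rw [mul_neg, Real.cosh_neg, Real.cosh_neg] at h
  rw [← h, U_eval_prod, Fin.prod_univ_eq_prod_range
    (fun j => (((2 * Real.cos (ang (2 * w) j) : ℝ) : ℂ) + I * (2 * Real.cos (ang (2 * w) k) : ℝ))),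
    norm_prod, norm_prod]
  refine Finset.prod_congr rfl fun j _ => ?_
  rw [← norm_neg, Real.sinh_neg, th, Real.sinh_arsinh]
  congr 1
  push_cast
  ring

/-- The logarithm of the number of tilings of a `2w × 2w` square is a Riemann sum of
`|arsinh (cos x)|`, up to a boundary term. -/
theorem two_log_Z (w : ℕ) :
    (2 * w : ℕ) * ∑ k ∈ Finset.range (2 * w), |th (2 * w) k| - (2 * w : ℕ) * Real.log 2 ≤
      2 * Real.log (Z (2 * w) (2 * w) 0 0 0 0) ∧
    2 * Real.log (Z (2 * w) (2 * w) 0 0 0 0) ≤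
      (2 * w : ℕ) * ∑ k ∈ Finset.range (2 * w), |th (2 * w) k| := by
  have h := (norm_det w (2 * w)).symm.trans (norm_det_K w)
  have h2 := congrArg Real.log h
  have hb := fun k => cosh_bounds (2 * w) (th (2 * w) k)
  have hpos : ∀ k, 0 < Real.cosh ((2 * w + 1 : ℕ) * th (2 * w) k) / Real.cosh (th (2 * w) k) :=
    fun k => div_pos (Real.cosh_pos _) (Real.cosh_pos _)
  rw [Real.log_pow, Real.log_prod (fun k _ => (hpos k).ne')] at h2
  push_cast at h2
  have hl : ∀ k, (2 * w : ℕ) * |th (2 * w) k| - Real.log 2 ≤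
      Real.log (Real.cosh ((2 * w + 1 : ℕ) * th (2 * w) k) / Real.cosh (th (2 * w) k)) := by
    intro k
    have := Real.log_le_log (by positivity) (hb k).1
    rwa [Real.log_div (Real.exp_ne_zero _) two_ne_zero, Real.log_exp] at this
  have hu : ∀ k, Real.log (Real.cosh ((2 * w + 1 : ℕ) * th (2 * w) k) / Real.cosh (th (2 * w) k))
      ≤ (2 * w : ℕ) * |th (2 * w) k| := by
    intro k
    have := Real.log_le_log (hpos k) (hb k).2
    rwa [Real.log_exp] at this
  push_cast at hl hu
  rw [h2, Finset.mul_sum]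
  constructor
  · have := Finset.sum_le_sum (s := Finset.range (2 * w)) (fun k _ => hl k)
    rw [Finset.sum_sub_distrib, Finset.sum_const, Finset.card_range, nsmul_eq_mul] at this
    exact_mod_cast this
  · exact_mod_cast Finset.sum_le_sum (s := Finset.range (2 * w)) (fun k _ => hu k)

end Dimer

/-! ### The limiting integral and Catalan's constant -/

namespace Dimer
open MeasureTheory intervalIntegral Set

/-- Catalan's constant as an integral, by integrating the power series of `arctan t / t` term
by term. -/
lemma integral_arctan_div : ∫ t in (0 : ℝ)..1, Real.arctan t / t =
    ∑' k : ℕ, (-1 : ℝ) ^ k / (2 * k + 1) ^ 2 := by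
  have hI : ∀ k : ℕ, ∫ t in (0 : ℝ)..1, t ^ (2 * k) / (2 * k + 1) = 1 / (2 * (k : ℝ) + 1) ^ 2 := by
    intro k
    rw [intervalIntegral.integral_div, integral_pow]
    push_cast
    have : (2 * (k : ℝ) + 1) ≠ 0 := by positivity
    simp
    field_simp
  have hcont : ∀ k : ℕ, Integrable (fun t : ℝ => (-1 : ℝ) ^ k * (t ^ (2 * k) / (2 * k + 1)))
      (volume.restrict (Ioc 0 1)) := by
    intro k
    have : Continuous (fun t : ℝ => (-1 : ℝ) ^ k * (t ^ (2 * k) / (2 * k + 1))) := by fun_prop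
    exact (intervalIntegrable_iff_integrableOn_Ioc_of_le zero_le_one).1 (this.intervalIntegrable 0 1)
  have hs : Summable fun k : ℕ => ∫ t in Ioc (0 : ℝ) 1, ‖(-1 : ℝ) ^ k * (t ^ (2 * k) / (2 * k + 1))‖ := by
    have h1 : Summable fun k : ℕ => 1 / (((k : ℝ) + 1) ^ 2) := by
      have := (summable_nat_add_iff 1).2 (Real.summable_one_div_nat_pow.2 (one_lt_two))
      simpa using this
    refine Summable.of_nonneg_of_le (fun k => integral_nonneg fun t => norm_nonneg _) (fun k => ?_) h1
    have : ∀ t : ℝ, ‖(-1 : ℝ) ^ k * (t ^ (2 * k) / (2 * k + 1))‖ = t ^ (2 * k) / (2 * k + 1) := by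
      intro t
      have : 0 ≤ t ^ (2 * k) / (2 * (k : ℝ) + 1) := by
        rw [pow_mul]; positivity
      rw [norm_mul, norm_pow, norm_neg, norm_one, one_pow, one_mul, Real.norm_of_nonneg this]
    simp_rw [this]
    rw [← integral_of_le zero_le_one, hI]
    have hk : (0 : ℝ) ≤ k := Nat.cast_nonneg k
    refine one_div_le_one_div_of_le (by positivity) ?_
    gcongr
    linarith
  have h := (hasSum_integral_of_summable_integral_norm hcont hs).tsum_eq
  have e : ∀ k : ℕ, ∫ t in Ioc (0 : ℝ) 1, (-1 : ℝ) ^ k * (t ^ (2 * k) / (2 * k + 1)) =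
      (-1 : ℝ) ^ k / (2 * k + 1) ^ 2 := by
    intro k
    rw [← integral_of_le zero_le_one, intervalIntegral.integral_const_mul, hI]
    ring
  rw [tsum_congr e] at h
  rw [h, integral_of_le zero_le_one, integral_Ioc_eq_integral_Ioo, integral_Ioc_eq_integral_Ioo]
  refine setIntegral_congr_fun measurableSet_Ioo fun t ht => ?_
  have ha := Real.hasSum_arctan (x := t) (by rw [Real.norm_of_nonneg ht.1.le]; exact ht.2)
  rw [← (ha.div_const t).tsum_eq]
  refine tsum_congr fun k => ?_
  have := ht.1.ne'
  have : (2 * (k : ℝ) + 1) ≠ 0 := by positivity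
  push_cast
  field_simp
  ring

lemma inner_x {t : ℝ} (ht : 0 < t) : ∫ x in (0 : ℝ)..(Real.pi / 2),
    Real.cos x / √(1 + (t * Real.cos x) ^ 2) = Real.arctan t / t := by
  have hd : ∀ x : ℝ, HasDerivAt (fun x => Real.arctan (t * Real.sin x / √(1 + (t * Real.cos x) ^ 2)) / t)
      (Real.cos x / √(1 + (t * Real.cos x) ^ 2)) x := by
    intro x
    have hp : 0 < 1 + (t * Real.cos x) ^ 2 := by positivity
    have h1 : HasDerivAt (fun x => √(1 + (t * Real.cos x) ^ 2)) _ x :=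
      ((((Real.hasDerivAt_cos x).const_mul t).pow 2).const_add 1).sqrt hp.ne'
    have h2 := ((((Real.hasDerivAt_sin x).const_mul t).div h1 (Real.sqrt_pos.2 hp).ne').arctan).div_const t
    refine h2.congr_deriv ?_
    simp only [Pi.div_apply]
    symm
    have hs := Real.sq_sqrt hp.le
    have hsp := Real.sqrt_pos.2 hp
    have hsc := Real.sin_sq_add_cos_sq x
    generalize √(1 + (t * Real.cos x) ^ 2) = D at *
    generalize Real.sin x = s at *
    generalize Real.cos x = c at *
    have : D ^ 2 + (t * s) ^ 2 ≠ 0 := by positivity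
    have e : D ^ 2 + t ^ 2 * s ^ 2 = 1 + t ^ 2 := by
      rw [hs]; linear_combination t ^ 2 * hsc
    have : 1 + (t * s / D) ^ 2 = (1 + t ^ 2) / D ^ 2 := by
      rw [← e]; field_simp
    rw [this]
    have e2 : t * c * D - t * s * (2 * (t * c) ^ (2 - 1) * (t * -s) / (2 * D)) =
        t * c * (1 + t ^ 2) / D := by
      rw [← e]
      field_simp
      ring
    push_cast
    rw [e2]
    field_simp
  have hc : Continuous fun x => Real.cos x / √(1 + (t * Real.cos x) ^ 2) := by
    refine Real.continuous_cos.div (by fun_prop) fun x => ?_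
    positivity
  rw [integral_eq_sub_of_hasDerivAt (fun x _ => hd x) (hc.intervalIntegrable _ _)]
  simp

lemma inner_t (x : ℝ) : ∫ t in (0 : ℝ)..1, Real.cos x / √(1 + (t * Real.cos x) ^ 2) =
    Real.arsinh (Real.cos x) := by
  have hd : ∀ t : ℝ, HasDerivAt (fun t => Real.arsinh (t * Real.cos x))
      (Real.cos x / √(1 + (t * Real.cos x) ^ 2)) t := by
    intro t
    refine ((hasDerivAt_id t).mul_const (Real.cos x)).arsinh.congr_deriv ?_
    simp only [id, smul_eq_mul, one_mul]
    rw [div_eq_mul_inv, mul_comm]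
  have hc : Continuous fun t => Real.cos x / √(1 + (t * Real.cos x) ^ 2) := by
    refine continuous_const.div (by fun_prop) fun x => ?_
    positivity
  rw [integral_eq_sub_of_hasDerivAt (fun x _ => hd x) (hc.intervalIntegrable _ _)]
  simp

/-- Writing `arsinh (cos x)` as an integral over `t` (`inner_t`) and exchanging the integrals leaves
`arctan t / t` (`inner_x`). -/
lemma integral_arsinh_cos : ∫ x in (0 : ℝ)..(Real.pi / 2), Real.arsinh (Real.cos x) =
    ∑' k : ℕ, (-1 : ℝ) ^ k / (2 * k + 1) ^ 2 := by
  rw [← integral_arctan_div]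
  simp_rw [← inner_t]
  rw [intervalIntegral_intervalIntegral_swap]
  · rw [integral_of_le zero_le_one, integral_of_le zero_le_one]
    exact setIntegral_congr_fun measurableSet_Ioc fun t ht => inner_x ht.1
  · have hc : Continuous (Function.uncurry fun x t : ℝ => Real.cos x / √(1 + (t * Real.cos x) ^ 2)) := by
      unfold Function.uncurry
      refine Continuous.div (by fun_prop) (by fun_prop) fun x => ?_
      positivity
    refine (hc.continuousOn.integrableOn_compact (isCompact_uIcc.prod isCompact_uIcc)).mono_set
      (prod_mono uIoc_subset_uIcc uIoc_subset_uIcc)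

/-- The density `|arsinh (cos x)|` of the logarithm of the number of tilings. -/
noncomputable def gfun (x : ℝ) : ℝ := |Real.arsinh (Real.cos x)|

lemma gfun_cont : Continuous gfun := by
  unfold gfun
  exact (Real.continuous_cos.arsinh).abs

lemma integral_gfun : ∫ x in (0 : ℝ)..Real.pi, gfun x =
    2 * ∑' k : ℕ, (-1 : ℝ) ^ k / (2 * k + 1) ^ 2 := by
  have h1 : ∫ x in (0 : ℝ)..(Real.pi / 2), gfun x = ∑' k : ℕ, (-1 : ℝ) ^ k / (2 * k + 1) ^ 2 := by
    rw [← integral_arsinh_cos]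
    refine integral_congr fun x hx => ?_
    rw [uIcc_of_le (by positivity)] at hx
    refine abs_of_nonneg (Real.arsinh_nonneg_iff.2 (Real.cos_nonneg_of_mem_Icc ⟨?_, hx.2⟩))
    linarith [hx.1, Real.pi_pos]
  have h2 : ∫ x in (Real.pi / 2)..Real.pi, gfun x = ∫ x in (0 : ℝ)..(Real.pi / 2), gfun x := by
    have := integral_comp_sub_left (a := 0) (b := Real.pi / 2) gfun Real.pi
    rw [sub_zero, show Real.pi - Real.pi / 2 = Real.pi / 2 by ring] at this
    rw [← this]
    refine integral_congr fun x hx => ?_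
    simp [gfun]
  rw [← integral_add_adjacent_intervals (gfun_cont.intervalIntegrable 0 (Real.pi / 2))
    (gfun_cont.intervalIntegrable _ _), h2, h1]
  ring

lemma gfun_lip (x y : ℝ) : |gfun x - gfun y| ≤ |x - y| := by
  refine (abs_abs_sub_abs_le _ _).trans (le_trans ?_ (Real.abs_cos_sub_cos_le x y))
  have := Convex.norm_image_sub_le_of_norm_deriv_le (f := Real.arsinh) (C := 1) (s := univ)
    (fun x _ => Real.differentiable_arsinh x) (fun x _ => ?_) convex_univ (mem_univ (Real.cos y))
    (mem_univ (Real.cos x))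
  · simpa using this
  · rw [(Real.hasDerivAt_arsinh x).deriv, norm_inv, Real.norm_of_nonneg (Real.sqrt_nonneg _)]
    refine inv_le_one_of_one_le₀ (Real.one_le_sqrt.2 ?_)
    nlinarith [sq_nonneg x]

/-- The right Riemann sum of a 1-Lipschitz function with mesh `π / (S + 1)`. -/
lemma riemann (S : ℕ) : |Real.pi / (S + 1) * ∑ k ∈ Finset.range (S + 1), gfun ((k + 1) * (Real.pi / (S + 1)))
    - ∫ x in (0 : ℝ)..Real.pi, gfun x| ≤ Real.pi * (Real.pi / (S + 1)) := by
  set h : ℝ := Real.pi / (S + 1) with hh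
  have hS : (0 : ℝ) < S + 1 := by positivity
  have h0 : 0 ≤ h := by have := Real.pi_pos; positivity
  have hend : ((S + 1 : ℕ) : ℝ) * h = Real.pi := by rw [hh]; push_cast; field_simp
  have hsum := sum_integral_adjacent_intervals (f := gfun) (μ := volume) (a := fun k : ℕ => (k : ℝ) * h)
    (n := S + 1) (fun k _ => gfun_cont.intervalIntegrable _ _)
  rw [hend, Nat.cast_zero, zero_mul] at hsum
  rw [← hsum, Finset.mul_sum, ← Finset.sum_sub_distrib]
  refine (Finset.abs_sum_le_sum_abs _ _).trans ?_
  have hterm : ∀ k ∈ Finset.range (S + 1), |h * gfun ((k + 1) * h) -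
      ∫ x in ((k : ℝ) * h)..((k + 1 : ℕ) : ℝ) * h, gfun x| ≤ h * h := by
    intro k _
    have e : h * gfun ((k + 1) * h) = ∫ x in ((k : ℝ) * h)..((k + 1 : ℕ) : ℝ) * h, gfun ((k + 1) * h) := by
      rw [intervalIntegral.integral_const, smul_eq_mul]
      push_cast
      ring
    rw [e, ← intervalIntegral.integral_sub (by simp) (gfun_cont.intervalIntegrable _ _)]
    have := norm_integral_le_of_norm_le_const (a := (k : ℝ) * h) (b := ((k + 1 : ℕ) : ℝ) * h) (C := h)
      (f := fun x => gfun ((k + 1) * h) - gfun x) (fun x hx => ?_)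
    · rw [Real.norm_eq_abs] at this
      refine this.trans (le_of_eq ?_)
      push_cast
      rw [show ((k : ℝ) + 1) * h - k * h = h by ring, abs_of_nonneg h0]
    · push_cast at hx
      rw [uIoc_of_le (by nlinarith)] at hx
      refine (gfun_lip _ _).trans ?_
      rw [abs_le]
      constructor <;> nlinarith [hx.1, hx.2]
  refine (Finset.sum_le_sum hterm).trans (le_of_eq ?_)
  rw [Finset.sum_const, Finset.card_range, nsmul_eq_mul, ← mul_assoc, hend]

end Dimer

/-! ### The growth rate -/

namespace Dimer
open Filter

/-- Catalan's constant. -/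
noncomputable def catG : ℝ := ∑' k : ℕ, (-1 : ℝ) ^ k / (2 * k + 1) ^ 2

lemma catG_nonneg : 0 ≤ catG := by
  have h : (0 : ℝ) ≤ ∫ x in (0 : ℝ)..Real.pi, gfun x :=
    intervalIntegral.integral_nonneg Real.pi_pos.le fun x _ => abs_nonneg _
  rw [integral_gfun] at h
  unfold catG
  linarith

lemma sum_th (S : ℕ) : |∑ k ∈ Finset.range S, |th S k| - S * (2 * catG / Real.pi)| ≤
    Real.pi + 2 + 2 * catG / Real.pi := by
  have hpi := Real.pi_pos
  have hr := riemann S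
  rw [integral_gfun, Finset.sum_range_succ] at hr
  have hS : (0 : ℝ) < S + 1 := by positivity
  have e : ((S : ℝ) + 1) * (Real.pi / (S + 1)) = Real.pi := by field_simp
  have eth : ∀ k, |th S k| = gfun ((k + 1) * (Real.pi / (S + 1))) := by
    intro k
    rw [th, gfun, ang, mul_div_assoc]
  simp_rw [eth]
  rw [e] at hr
  -- `riemann` has one more term than the sum over the spectrum; it is bounded by `π / 2`.
  have hg := gfun_lip Real.pi (Real.pi / 2)
  have hg0 : 0 ≤ gfun Real.pi := abs_nonneg _
  have hg1 : gfun (Real.pi / 2) = 0 := by simp [gfun]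
  rw [hg1, sub_zero, abs_of_nonneg hg0, show Real.pi - Real.pi / 2 = Real.pi / 2 by ring,
    abs_of_pos (by positivity)] at hg
  have hp4 := Real.pi_le_four
  change |_ - 2 * catG| ≤ _ at hr
  have hc := catG_nonneg
  have hc2 : 0 ≤ 2 * catG / Real.pi := by positivity
  generalize ∑ k ∈ Finset.range S, gfun ((k + 1) * (Real.pi / (S + 1))) = R at *
  have e2 : Real.pi / (S + 1) * (R + gfun Real.pi) - 2 * catG =
      Real.pi / (S + 1) * (R + gfun Real.pi - (S + 1) * (2 * catG / Real.pi)) := by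
    field_simp
  have hh : 0 < Real.pi / ((S : ℝ) + 1) := by positivity
  rw [e2, abs_mul, abs_of_pos hh, mul_comm Real.pi (Real.pi / _)] at hr
  have hrr := abs_le.1 (le_of_mul_le_mul_left hr hh)
  rw [abs_le]
  constructor <;> linarith [hrr.1, hrr.2]

/-- The constant of the boundary term in `log_Z_square`. -/
noncomputable def errC : ℝ := Real.pi + 2 + 2 * catG / Real.pi + Real.log 2

lemma errC_nonneg : 0 ≤ errC := by
  have := catG_nonneg
  have := Real.pi_pos
  have := Real.log_nonneg one_le_two
  unfold errC
  positivity

/-- The growth rate for squares with free boundary, with an error linear in the side. -/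
lemma log_Z_square (w : ℕ) :
    |2 * Real.log (Z (2 * w) (2 * w) 0 0 0 0) - 2 * ((2 * w : ℕ) : ℝ) ^ 2 * (catG / Real.pi)| ≤
      (2 * w : ℕ) * errC := by
  obtain ⟨h1, h2⟩ := two_log_Z w
  have hs := abs_le.1 (sum_th (2 * w))
  have hl := Real.log_nonneg one_le_two
  have hw : (0 : ℝ) ≤ (2 * w : ℕ) := Nat.cast_nonneg _
  generalize ((2 * w : ℕ) : ℝ) = S at *
  have a1 := mul_le_mul_of_nonneg_left hs.1 hw
  have a2 := mul_le_mul_of_nonneg_left hs.2 hw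
  have a3 := mul_nonneg hw hl
  have e : S * (S * (2 * catG / Real.pi)) = 2 * S ^ 2 * (catG / Real.pi) := by ring
  unfold errC
  rw [mul_sub, e] at a1 a2
  rw [abs_le]
  constructor <;> linarith

/-- No boundary condition beats the free growth rate: divide the logarithm of `Z_pow_le` by `4m²` and
let `m → ∞`. -/
lemma log_Z_le {L : ℕ} (hL : Even L) {s u : ℕ → ℕ} (hs : ∀ y, s y ≤ 1) (hu : ∀ y, u y ≤ 1)
    (hZ : 0 < Z L L s s u u) :
    Real.log (Z L L s s u u) ≤ (L : ℝ) ^ 2 * (catG / Real.pi) := by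
  have hc : 0 ≤ catG / Real.pi := div_nonneg catG_nonneg Real.pi_pos.le
  have hC := errC_nonneg
  by_contra! hlt
  set x := Real.log (Z L L s s u u)
  set D := 3 * (L : ℝ) ^ 2 * (catG / Real.pi) + L * errC with hD
  -- An excess over the rate would be at most `D / m` for every `m ≥ 1`.
  obtain ⟨m, hm⟩ := exists_nat_gt (max 1 (D / (x - (L : ℝ) ^ 2 * (catG / Real.pi))))
  have hm1 : (1 : ℝ) < m := (le_max_left _ _).trans_lt hm
  have hm2 := (le_max_right _ _).trans_lt hm
  rw [div_lt_iff₀ (by linarith)] at hm2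
  have hp := Z_pow_le hL hs hu m
  have hp' : ((Z L L s s u u : ℕ) : ℝ) ^ (4 * m ^ 2) ≤ (Z (2 * (L * (m + 1))) (2 * (L * (m + 1))) 0 0 0 0 : ℕ) := by
    rw [← mul_assoc]
    exact_mod_cast hp
  have hlog := Real.log_le_log (pow_pos (by exact_mod_cast hZ) _) hp'
  rw [Real.log_pow] at hlog
  have hb := (abs_le.1 (log_Z_square (L * (m + 1)))).2
  change _ * x ≤ _ at hlog
  push_cast at hlog hb
  have hL0 : (0 : ℝ) ≤ L := Nat.cast_nonneg _
  generalize Real.log (Z (2 * (L * (m + 1))) (2 * (L * (m + 1))) 0 0 0 0 : ℕ) = y at *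
  generalize catG / Real.pi = c at *
  generalize (m : ℝ) = M at *
  generalize (L : ℝ) = l at *
  have k1 : 4 * M ^ 2 * x ≤ 4 * l ^ 2 * (M + 1) ^ 2 * c + l * (M + 1) * errC := by nlinarith
  have k2 : M * (M * (x - l ^ 2 * c)) ≤ M * D := by
    rw [hD]
    have p1 : 0 ≤ l ^ 2 * c * (M - 1) := by
      have : 0 ≤ M - 1 := by linarith
      positivity
    have p2 : 0 ≤ l * errC * (M - 1) := by
      have : 0 ≤ M - 1 := by linarith
      positivity
    have p3 : 0 ≤ l * errC * M := by positivity
    nlinarith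
  have := le_of_mul_le_mul_left k2 (by linarith)
  linarith

lemma log_torus_le {L : ℕ} [NeZero L] (hL : Even L) (h3 : 3 ≤ L)
    (hN : 0 < Nat.card {M : (Tor L).Subgraph // M.IsPerfectMatching}) :
    Real.log (Nat.card {M : (Tor L).Subgraph // M.IsPerfectMatching}) ≤
      (L : ℝ) ^ 2 * (catG / Real.pi) + L * Real.log 4 := by
  set A := (L : ℝ) ^ 2 * (catG / Real.pi)
  have h := torus_upper h3 ⌊Real.exp A⌋₊ (fun s u hs hu => by
    refine Nat.le_floor ?_
    rcases Nat.eq_zero_or_pos (Z L L s s u u) with h0 | h0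
    · rw [h0, Nat.cast_zero]; positivity
    · rw [← Real.log_le_iff_le_exp (by exact_mod_cast h0)]
      exact log_Z_le hL hs hu h0)
  have h' : (Nat.card {M : (Tor L).Subgraph // M.IsPerfectMatching} : ℝ) ≤ Real.exp A * 4 ^ L := by
    calc (Nat.card {M : (Tor L).Subgraph // M.IsPerfectMatching} : ℝ)
        ≤ ((⌊Real.exp A⌋₊ * 4 ^ L : ℕ) : ℝ) := by exact_mod_cast h
      _ ≤ _ := by
        push_cast
        gcongr
        exact Nat.floor_le (Real.exp_pos _).le
  have := Real.log_le_log (by exact_mod_cast hN) h'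
  rwa [Real.log_mul (Real.exp_ne_zero _) (by positivity), Real.log_exp, Real.log_pow] at this

lemma torus_bounds {n : ℕ} (hn : 2 ≤ n) :
    0 < Nat.card {M : (SimpleGraph.cycleGraph (2 * n) □ SimpleGraph.cycleGraph (2 * n)).Subgraph //
              M.IsPerfectMatching} ∧
    4 * (n : ℝ) ^ 2 * (catG / Real.pi) - n * errC ≤
      Real.log (Nat.card {M : (SimpleGraph.cycleGraph (2 * n) □ SimpleGraph.cycleGraph (2 * n)).Subgraph //
              M.IsPerfectMatching}) ∧
    Real.log (Nat.card {M : (SimpleGraph.cycleGraph (2 * n) □ SimpleGraph.cycleGraph (2 * n)).Subgraph //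
              M.IsPerfectMatching}) ≤ 4 * (n : ℝ) ^ 2 * (catG / Real.pi) + 2 * n * Real.log 4 := by
  have : NeZero (2 * n) := ⟨by omega⟩
  have h3 : 3 ≤ 2 * n := by omega
  have hl := torus_lower (L := 2 * n) h3
  have hb := Z_brick (a := 2 * n) (b := 2 * n) (even_two_mul n)
  have hN := lt_of_lt_of_le Nat.one_pos (hb.trans hl)
  have hu := log_torus_le (L := 2 * n) (even_two_mul n) h3 hN
  have hlog := Real.log_le_log (Nat.cast_pos (α := ℝ).2 hb) (Nat.cast_le (α := ℝ).2 hl)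
  have hz := (abs_le.1 (log_Z_square n)).1
  push_cast at hu hz
  refine ⟨hN, ?_, ?_⟩
  · refine le_trans ?_ hlog
    linarith
  · refine hu.trans (le_of_eq ?_)
    ring

lemma tendsto_growth : Tendsto
      (fun n : ℕ =>
        Real.log ((Real.sqrt 2) ^ (2 * n ^ 2) *
          (Nat.card {M : (SimpleGraph.cycleGraph (2 * n) □ SimpleGraph.cycleGraph (2 * n)).Subgraph //
              M.IsPerfectMatching} : ℝ)) / (2 * (n : ℝ) ^ 2))
      atTop (nhds ((1 / 2) * Real.log 2 + (2 / Real.pi) * catG)) := by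
  set l := (1 / 2) * Real.log 2 + (2 / Real.pi) * catG with hl
  have hinv : Tendsto (fun n : ℕ => ((n : ℝ))⁻¹) atTop (nhds 0) := tendsto_inv_atTop_nhds_zero_nat
  have t1 : Tendsto (fun n : ℕ => l - errC / 2 * ((n : ℝ))⁻¹) atTop (nhds l) := by
    simpa using (hinv.const_mul (errC / 2)).const_sub l
  have t2 : Tendsto (fun n : ℕ => l + Real.log 4 * ((n : ℝ))⁻¹) atTop (nhds l) := by
    simpa using (hinv.const_mul (Real.log 4)).const_add l
  have key : ∀ n : ℕ, 2 ≤ n → l - errC / 2 * ((n : ℝ))⁻¹ ≤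
      Real.log ((Real.sqrt 2) ^ (2 * n ^ 2) *
          (Nat.card {M : (SimpleGraph.cycleGraph (2 * n) □ SimpleGraph.cycleGraph (2 * n)).Subgraph //
              M.IsPerfectMatching} : ℝ)) / (2 * (n : ℝ) ^ 2) ∧
      Real.log ((Real.sqrt 2) ^ (2 * n ^ 2) *
          (Nat.card {M : (SimpleGraph.cycleGraph (2 * n) □ SimpleGraph.cycleGraph (2 * n)).Subgraph //
              M.IsPerfectMatching} : ℝ)) / (2 * (n : ℝ) ^ 2) ≤ l + Real.log 4 * ((n : ℝ))⁻¹ := by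
    intro n hn
    obtain ⟨hN, h1, h2⟩ := torus_bounds hn
    have hn0 : (0 : ℝ) < n := by exact_mod_cast (by omega : 0 < n)
    have hNr : (Nat.card {M : (SimpleGraph.cycleGraph (2 * n) □ SimpleGraph.cycleGraph (2 * n)).Subgraph //
              M.IsPerfectMatching} : ℝ) ≠ 0 := by exact_mod_cast hN.ne'
    rw [Real.log_mul (by positivity) hNr, pow_mul, Real.sq_sqrt zero_le_two, Real.log_pow]
    push_cast
    have hpi := Real.pi_pos.ne'
    constructor
    · rw [le_div_iff₀ (by positivity), hl]
      have : (1 / 2 * Real.log 2 + 2 / Real.pi * catG - errC / 2 * (n : ℝ)⁻¹) * (2 * (n : ℝ) ^ 2) =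
          n ^ 2 * Real.log 2 + (4 * (n : ℝ) ^ 2 * (catG / Real.pi) - n * errC) := by
        field_simp
        ring
      rw [this]
      linarith
    · rw [div_le_iff₀ (by positivity), hl]
      have : (1 / 2 * Real.log 2 + 2 / Real.pi * catG + Real.log 4 * (n : ℝ)⁻¹) * (2 * (n : ℝ) ^ 2) =
          n ^ 2 * Real.log 2 + (4 * (n : ℝ) ^ 2 * (catG / Real.pi) + 2 * n * Real.log 4) := by
        field_simp
        ring
      rw [this]
      linarith
  refine tendsto_of_tendsto_of_tendsto_of_le_of_le' t1 t2 ?_ ?_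
  · filter_upwards [eventually_ge_atTop 2] with n hn using (key n hn).1
  · filter_upwards [eventually_ge_atTop 2] with n hn using (key n hn).2

end Dimer

open Filter

/-- The growth rate of the dimer partition function of the toroidal square lattice
`C_{2n} □ C_{2n}` with constant edge weight `√2` is `(1/2)·log 2 + (2/π)·K`,
where `K` is Catalan's constant. -/
theorem growth_rate_toroidal_square_lattice :
    Filter.Tendsto
      (fun n : ℕ =>
        Real.log ((Real.sqrt 2) ^ (2 * n ^ 2) *
          (Nat.card {M : (SimpleGraph.cycleGraph (2 * n) □ SimpleGraph.cycleGraph (2 * n)).Subgraph //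
              M.IsPerfectMatching} : ℝ)) / (2 * (n : ℝ) ^ 2))
      Filter.atTop
      (nhds ((1 / 2) * Real.log 2 +
        (2 / Real.pi) * ∑' k : ℕ, (-1 : ℝ) ^ k / (2 * k + 1) ^ 2)) := by
  exact Dimer.tendsto_growth
end

section
/- The Lobachevsky function satisfies L(π/4) = K/2, i.e. −∫_0^{π/4} log(2 sin t) dt = (1/2) · ∑_{k=0}^∞ (−1)^k/(2k+1)². -/
/-!
Write `A` and `B` for the integrals of `log (sin t)` and `log (cos t)` over `[0, π/4]`, and
`K` for Catalan's constant; the left-hand side of the theorem is `-(π/4 · log 2 + A)`.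

The reflection `t ↦ π/2 - t` turns `B` into the integral of `log (sin t)` over `[π/4, π/2]`, so
`A + B` is Euler's integral `-(π/2) log 2`. On the other hand `A - B` is the integral of
`log (tan t)`, which the substitution `u = tan t` turns into `∫ log u / (1 + u²)` over `(0, 1)`;
expanding `1 / (1 + u²)` as a geometric series and using `∫ u^(2k) log u = -1 / (2k+1)²` shows
that it is `-K` (`integral_log_div_one_add_sq`, `integral_log_tan`). Hence
`A = -(π/4) log 2 - K/2`.
-/

open Real MeasureTheory Set

lemma intervalIntegrable_pow_mul_log (n : ℕ) :
    IntervalIntegrable (fun u : ℝ => u ^ n * log u) volume 0 1 :=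
  intervalIntegral.intervalIntegrable_log'.continuousOn_mul (by fun_prop)

lemma integral_pow_mul_log (n : ℕ) :
    ∫ u in (0 : ℝ)..1, u ^ n * log u = -(1 / ((n : ℝ) + 1) ^ 2) := by
  -- The antiderivative `uⁿ⁺¹ log u / (n + 1) - uⁿ⁺¹ / (n + 1)²` is written with the factor
  -- `u * log u`, which is continuous at `0` although `log` is not.
  have hcont : Continuous fun u : ℝ =>
      u ^ n * (u * log u) / (n + 1) - u ^ (n + 1) / ((n : ℝ) + 1) ^ 2 := by
    have := Real.continuous_mul_log
    fun_prop
  have hn : (n : ℝ) + 1 ≠ 0 := by positivity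
  rw [intervalIntegral.integral_eq_sub_of_hasDerivAt_of_le zero_le_one hcont.continuousOn]
  · simp
  · intro u hu
    have hu0 : u ≠ 0 := hu.1.ne'
    have h := ((((hasDerivAt_pow (n + 1) u).mul (hasDerivAt_log hu0)).div_const ((n : ℝ) + 1)).sub
      ((hasDerivAt_pow (n + 1) u).div_const (((n : ℝ) + 1) ^ 2)))
    refine (h.congr_of_eventuallyEq (.of_forall fun v => ?_)).congr_deriv ?_
    · simp [pow_succ, mul_assoc]
    · push_cast
      field_simp
      ring
  · exact intervalIntegrable_pow_mul_log n

/-- Termwise integration of the geometric series is legitimate even though the series fails to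
converge at `u = 1`: the `L¹` norms of its terms are `1 / (2k+1)²`, which are summable. -/
lemma integral_log_div_one_add_sq :
    ∫ u in Ioo (0 : ℝ) 1, log u / (1 + u ^ 2) =
      -∑' k : ℕ, (-1 : ℝ) ^ k / (2 * k + 1) ^ 2 := by
  have hint (k : ℕ) : ∫ u in Ioo (0 : ℝ) 1, u ^ (2 * k) * log u = -(1 / (2 * (k : ℝ) + 1) ^ 2) := by
    rw [← integral_Ioc_eq_integral_Ioo, ← intervalIntegral.integral_of_le zero_le_one,
      integral_pow_mul_log]
    push_cast
    rfl
  have hintegrable (k : ℕ) :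
      Integrable (fun u : ℝ => (-1) ^ k * (u ^ (2 * k) * log u)) (volume.restrict (Ioo 0 1)) := by
    refine Integrable.const_mul ?_ _
    have := intervalIntegrable_pow_mul_log (2 * k)
    rw [intervalIntegrable_iff_integrableOn_Ioo_of_le zero_le_one] at this
    exact this
  have hnorm (k : ℕ) : ∫ u in Ioo (0 : ℝ) 1, ‖(-1) ^ k * (u ^ (2 * k) * log u)‖ =
      1 / (2 * (k : ℝ) + 1) ^ 2 := by
    rw [← neg_neg (1 / _), ← hint, ← integral_neg]
    refine setIntegral_congr_fun measurableSet_Ioo fun u hu => ?_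
    have hlog : log u ≤ 0 := log_nonpos hu.1.le hu.2.le
    simp only [norm_mul, norm_pow, norm_neg, norm_one, one_pow, one_mul, norm_eq_abs]
    rw [abs_of_nonpos hlog, abs_of_pos hu.1]
    ring
  have hsummable : Summable fun k : ℕ => 1 / (2 * (k : ℝ) + 1) ^ 2 := by
    have h : Summable fun k : ℕ => 1 / (k : ℝ) ^ 2 := Real.summable_one_div_nat_pow.2 one_lt_two
    have := h.comp_injective (i := fun k : ℕ => 2 * k + 1) fun a b hab => by simpa using hab
    simpa [Function.comp_def] using this
  have key := hasSum_integral_of_summable_integral_norm hintegrable (by simpa only [hnorm])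
  simp only [integral_const_mul, hint] at key
  rw [← tsum_neg]
  calc _ = ∫ u in Ioo (0 : ℝ) 1, ∑' k : ℕ, (-1) ^ k * (u ^ (2 * k) * log u) := by
        refine setIntegral_congr_fun measurableSet_Ioo fun u hu => ?_
        have hu2 : u ^ 2 < 1 := by nlinarith [hu.1, hu.2]
        have := (hasSum_geometric_of_abs_lt_one (r := -u ^ 2)
          (by rw [abs_neg, abs_of_nonneg (sq_nonneg u)]; exact hu2)).mul_right (log u)
        rw [sub_neg_eq_add, inv_mul_eq_div] at this
        rw [← this.tsum_eq]
        refine tsum_congr fun k => ?_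
        rw [neg_pow, pow_mul, mul_assoc]
    _ = _ := by
        rw [← key.tsum_eq]
        exact tsum_congr fun k => by ring

lemma arctan_image_Ioo : arctan '' Ioo 0 1 = Ioo 0 (π / 4) := by
  ext t
  constructor
  · rintro ⟨u, hu, rfl⟩
    exact ⟨by simpa using arctan_strictMono hu.1, by simpa using arctan_strictMono hu.2⟩
  · intro ht
    have h1 : -(π / 2) < t := by linarith [ht.1, pi_pos]
    have h2 : t < π / 2 := by linarith [ht.2, pi_pos]
    have h := arctan_tan h1 h2
    refine ⟨tan t, ⟨?_, ?_⟩, h⟩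
    · exact tan_pos_of_pos_of_lt_pi_div_two ht.1 h2
    · rw [← arctan_strictMono.lt_iff_lt, h, arctan_one]
      exact ht.2

lemma integral_log_tan :
    ∫ t in (0 : ℝ)..(π / 4), log (tan t) = -∑' k : ℕ, (-1 : ℝ) ^ k / (2 * k + 1) ^ 2 := by
  -- Substituting `t = arctan u` by the image formula requires no integrability of `log ∘ tan`.
  rw [intervalIntegral.integral_of_le (by positivity), integral_Ioc_eq_integral_Ioo,
    ← arctan_image_Ioo, integral_image_eq_integral_abs_deriv_smul measurableSet_Ioo
      (fun u _ => (hasDerivAt_arctan u).hasDerivWithinAt) arctan_injective.injOn,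
    ← integral_log_div_one_add_sq]
  refine setIntegral_congr_fun measurableSet_Ioo fun u _ => ?_
  have : (0 : ℝ) < 1 / (1 + u ^ 2) := by positivity
  simp only [tan_arctan, smul_eq_mul, abs_of_pos this]
  ring


/-- The Lobachevsky function satisfies `L(π/4) = K/2`, where `K` is Catalan's constant:
`−∫_0^{π/4} log(2 sin t) dt = (1/2) · ∑_{k=0}^∞ (−1)^k/(2k+1)²`. -/
theorem lobachevsky_pi_div_four_eq_half_catalan :
    -(∫ t in (0 : ℝ)..(Real.pi / 4), Real.log (2 * Real.sin t)) =
      (1 / 2) * ∑' k : ℕ, (-1 : ℝ) ^ k / (2 * k + 1) ^ 2 := by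
  have hsin (a b : ℝ) : IntervalIntegrable (fun t => log (sin t)) volume a b :=
    intervalIntegrable_log_sin
  have hcos (a b : ℝ) : IntervalIntegrable (fun t => log (cos t)) volume a b :=
    intervalIntegrable_log_cos
  have hpi : (0 : ℝ) ≤ π / 4 := by positivity
  have hrefl : ∫ t in (π / 4)..(π / 2), log (sin t) = ∫ t in (0 : ℝ)..(π / 4), log (cos t) := by
    have := intervalIntegral.integral_comp_sub_left (a := 0) (b := π / 4)
      (fun t => log (sin t)) (π / 2)
    simp only [sin_pi_div_two_sub, sub_zero] at this
    rw [this]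
    congr 1
    ring
  have hsum : (∫ t in (0 : ℝ)..(π / 4), log (sin t)) + ∫ t in (0 : ℝ)..(π / 4), log (cos t) =
      -log 2 * π / 2 := by
    rw [← hrefl, intervalIntegral.integral_add_adjacent_intervals (hsin _ _) (hsin _ _),
      integral_log_sin_zero_pi_div_two]
  have hpos {t : ℝ} (ht : t ∈ Ioo 0 (π / 4)) : sin t ≠ 0 ∧ cos t ≠ 0 :=
    ⟨(sin_pos_of_pos_of_lt_pi ht.1 (by linarith [ht.2, pi_pos])).ne',
      (cos_pos_of_mem_Ioo ⟨by linarith [ht.1, pi_pos], by linarith [ht.2, pi_pos]⟩).ne'⟩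
  have hdiff : (∫ t in (0 : ℝ)..(π / 4), log (sin t)) - ∫ t in (0 : ℝ)..(π / 4), log (cos t) =
      -∑' k : ℕ, (-1 : ℝ) ^ k / (2 * k + 1) ^ 2 := by
    rw [← integral_log_tan, ← intervalIntegral.integral_sub (hsin _ _) (hcos _ _)]
    simp only [intervalIntegral.integral_of_le hpi, integral_Ioc_eq_integral_Ioo]
    refine setIntegral_congr_fun measurableSet_Ioo fun t ht => ?_
    simp only [tan_eq_sin_div_cos, log_div (hpos ht).1 (hpos ht).2]
  have htwo : ∫ t in (0 : ℝ)..(π / 4), log (2 * sin t) =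
      π / 4 * log 2 + ∫ t in (0 : ℝ)..(π / 4), log (sin t) := by
    have h : ∫ t in (0 : ℝ)..(π / 4), (log 2 + log (sin t)) =
        π / 4 * log 2 + ∫ t in (0 : ℝ)..(π / 4), log (sin t) := by
      rw [intervalIntegral.integral_add intervalIntegrable_const (hsin _ _)]
      simp
    rw [← h]
    simp only [intervalIntegral.integral_of_le hpi, integral_Ioc_eq_integral_Ioo]
    refine setIntegral_congr_fun measurableSet_Ioo fun t ht => ?_
    exact log_mul two_ne_zero (hpos ht).1
  rw [htwo]
  linarith
end

section
/- Let α, β be real numbers with −π < α < β < π, set θ = (β − α)/2, and let c ∈ ℂ, r > 0 be such that e^{iα} and e^{iβ} lie in the open disc of center c and radius r and the closed disc of center c and radius r is disjoint from the nonpositive real axis. Then (1/(4π²i)) · e^{i(α+β)/2} · ∮_{|z−c|=r} log z / ((z − e^{iα})(z − e^{iβ})) dz = (1/(2π)) · θ / sin θ, where log is the principal branch of the complex logarithm and the circle is traversed counterclockwise. -/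
open Complex

/-!
The closed disc lies in the slit plane, where `log` is holomorphic, so the residue theorem for two
simple poles `a = e^{iα}`, `b = e^{iβ}` (partial fractions and the Cauchy integral formula) gives
`∮ log z / ((z - a) (z - b)) dz = 2πi (log a - log b) / (a - b)`. As `α, β ∈ (-π, π)`, the
principal logarithms are `iα` and `iβ`, and `a - b = -2i e^{i(α+β)/2} sin ((β - α)/2)`, so the
half-angle phases cancel and `θ / sin θ` remains.
-/

/-- Cauchy integral formula for the divided difference of `f` at two distinct points. -/
lemma circleIntegral_div_two_poles {f : ℂ → ℂ} {c a b : ℂ} {r : ℝ} (hr : 0 < r)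
    (hf : DifferentiableOn ℂ f (Metric.closedBall c r))
    (ha : a ∈ Metric.ball c r) (hb : b ∈ Metric.ball c r) (hab : a ≠ b) :
    (∮ z in C(c, r), f z / ((z - a) * (z - b))) =
      2 * Real.pi * I * ((f a - f b) / (a - b)) := by
  have hne : ∀ w ∈ Metric.ball c r, ∀ z ∈ Metric.sphere c r, z - w ≠ 0 := by
    intro w hw z hz h
    rw [sub_eq_zero.mp h, Metric.mem_sphere] at hz
    exact (Metric.mem_ball.mp hw).ne hz
  have hint : ∀ w ∈ Metric.ball c r, CircleIntegrable (fun z => (z - w)⁻¹ • f z) c r := by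
    intro w hw
    apply ContinuousOn.circleIntegrable hr.le
    exact ((continuousOn_id.sub continuousOn_const).inv₀ (hne w hw)).smul
      (hf.continuousOn.mono Metric.sphere_subset_closedBall)
  have hpf : Set.EqOn (fun z => f z / ((z - a) * (z - b)))
      (fun z => (a - b)⁻¹ • ((z - a)⁻¹ • f z - (z - b)⁻¹ • f z)) (Metric.sphere c r) := by
    intro z hz
    have h1 := hne a ha z hz
    have h2 := hne b hb z hz
    have h3 := sub_ne_zero.mpr hab
    simp only [smul_eq_mul]
    field_simp
    ring
  rw [circleIntegral.integral_congr hr.le hpf, circleIntegral.integral_smul,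
    circleIntegral.integral_sub (hint a ha) (hint b hb),
    hf.circleIntegral_sub_inv_smul ha, hf.circleIntegral_sub_inv_smul hb]
  simp only [smul_eq_mul]
  ring

lemma exp_I_sub_exp_I (α β : ℝ) :
    exp (I * α) - exp (I * β) =
      -2 * I * exp (I * (α + β) / 2) * (Real.sin ((β - α) / 2) : ℝ) := by
  have h1 : exp (I * α) = exp (I * (α + β) / 2) * exp (-(((β - α) / 2 : ℂ)) * I) := by
    rw [← Complex.exp_add]; ring_nf
  have h2 : exp (I * β) = exp (I * (α + β) / 2) * exp (((β - α) / 2 : ℂ) * I) := by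
    rw [← Complex.exp_add]; ring_nf
  rw [h1, h2]
  push_cast
  rw [Complex.sin]
  linear_combination exp (I * (α + β) / 2) *
    (exp (-(((β - α) / 2 : ℂ)) * I) - exp (((β - α) / 2 : ℂ) * I)) * I_sq

lemma log_exp_I_mul {x : ℝ} (h1 : -Real.pi < x) (h2 : x < Real.pi) :
    log (exp (I * x)) = I * x :=
  Complex.log_exp (by simpa using h1) (by simpa using h2.le)

/-- Evaluation of the contour-integral formula for the inverse real Dirac operator on
an edge with rhombus angle `θ = (β − α)/2`:
`(1/(4π²i)) · e^{i(α+β)/2} · ∮_{|z−c|=r} log z / ((z − e^{iα})(z − e^{iβ})) dz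
  = (1/(2π)) · θ/sin θ`,
where `−π < α < β < π`, the two poles `e^{iα}, e^{iβ}` lie in the open disc of
center `c` and radius `r`, and the closed disc avoids the nonpositive real axis. -/
theorem inverse_dirac_contour_integral {α β : ℝ}
    (hα : -Real.pi < α) (hαβ : α < β) (hβ : β < Real.pi)
    {c : ℂ} {r : ℝ} (hr : 0 < r)
    (hslit : Metric.closedBall c r ⊆ Complex.slitPlane)
    (ha : Complex.exp (Complex.I * α) ∈ Metric.ball c r)
    (hb : Complex.exp (Complex.I * β) ∈ Metric.ball c r) :
    (1 / (4 * Real.pi ^ 2 * Complex.I)) * Complex.exp (Complex.I * (α + β) / 2) *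
        (∮ z in C(c, r), Complex.log z /
          ((z - Complex.exp (Complex.I * α)) * (z - Complex.exp (Complex.I * β)))) =
      ((1 / (2 * Real.pi)) * (((β - α) / 2) / Real.sin ((β - α) / 2)) : ℝ) := by
  have hsin : 0 < Real.sin ((β - α) / 2) :=
    Real.sin_pos_of_pos_of_lt_pi (by linarith) (by linarith)
  have hs : ((Real.sin ((β - α) / 2) : ℝ) : ℂ) ≠ 0 := by exact_mod_cast hsin.ne'
  have hE := Complex.exp_ne_zero (I * (α + β) / 2)
  have hpi : (Real.pi : ℂ) ≠ 0 := by exact_mod_cast Real.pi_ne_zero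
  have hsub := exp_I_sub_exp_I α β
  have hab : exp (I * α) ≠ exp (I * β) := by
    rw [← sub_ne_zero, hsub]
    simp [hs, hE, -Complex.ofReal_sin]
  have hlog : DifferentiableOn ℂ Complex.log (Metric.closedBall c r) := fun z hz =>
    (Complex.differentiableAt_log (hslit hz)).differentiableWithinAt
  rw [circleIntegral_div_two_poles hr hlog ha hb hab, log_exp_I_mul hα (hαβ.trans hβ),
    log_exp_I_mul (hα.trans hαβ) hβ, hsub]
  rw [Complex.ofReal_mul, Complex.ofReal_div ((β - α) / 2)]
  generalize ((Real.sin ((β - α) / 2) : ℝ) : ℂ) = s at hs ⊢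
  generalize exp (I * (α + β) / 2) = e at hE ⊢
  push_cast
  have hI := I_ne_zero
  field_simp
  ring
end
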